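/- arXiv:math/0602143 — 4 statements merged into one kernel-verified Lean document; each statement's English description precedes it below -/
import Mathlib

section
/- The generating function of the class of skew-merged permutations is (1−3x)/((1−2x)√(1−4x)); that is, if s_n denotes the number of skew-merged permutations of length n, then ∑_{n≥0} s_n x^n = (1−3x)/((1−2x)√(1−4x)). -/
/-- A permutation is skew-merged if it is the union of an increasing subsequence and a
decreasing subsequence. -/
def SkewMerged {n : ℕ} (π : Equiv.Perm (Fin n)) : Prop :=
  ∃ A : Set (Fin n),
    (∀ i ∈ A, ∀ j ∈ A, i < j → π i < π j) ∧
    (∀ i ∉ A, ∀ j ∉ A, i < j → π j < π i)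

/-!
Call a set `A` of positions a splitting of a permutation `π` if `π` increases on `A` and decreases
off `A`, and call a point of `π` a center if both parts of some splitting can be continued through
it. A skew-merged permutation has one more splitting than it has centers. As a splitting `A` of a
permutation of length `n` is determined by `A` and `π(A)`, and both can be arbitrary of equal size,
there are `∑ k, C(n, k) ^ 2 = C(2n, n)` splittings in all, so `s n + e n = C(2n, n)` where `e n`
counts the centers of all permutations of length `n`.

Deleting a center leaves a splitting together with a slot, a place where a point could be inserted.
A splitting has one more slot than it has points at which its two parts meet, and every center is
the meeting point of exactly two splittings, which differ by that center. Hence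
`e (n + 1) = C(2n, n) + 2 * e n`, and with `∑ n, C(2n, n) x ^ n = 1 / √(1 - 4x)` this determines the
generating functions of `e` and of `s`.
-/

open Finset

section FinsetFamily

variable {α : Type*} [DecidableEq α] {V : Finset (Finset α)} {A B M : Finset α}

theorem covBy_of_card_sdiff_le_one (hAB : #(A \ B) ≤ 1) (hBA : #(B \ A) ≤ 1) (h : #A < #B) :
    A ⋖ B := by
  have hcard : #(A \ B) + #B = #(B \ A) + #A := by
    rw [card_sdiff_add_card, card_sdiff_add_card, union_comm]
  rw [covBy_iff_card_sdiff_eq_one, ← sdiff_eq_empty_iff_subset, ← card_eq_zero]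
  lia

variable [Fintype α]

theorem card_insert_pairs_eq_mul (hsdiff : ∀ A ∈ V, ∀ B ∈ V, #(A \ B) ≤ 1) (hM : M ∈ V)
    (hmin : ∀ A ∈ V, #M ≤ #A) :
    #{q : Finset α × α | q.2 ∉ q.1 ∧ q.1 ∈ V ∧ insert q.2 q.1 ∈ V} =
      #{A ∈ V | #A = #M} * #{A ∈ V | ¬#A = #M} := by
  rw [← card_product]
  refine card_bij (fun q _ ↦ (q.1, insert q.2 q.1)) ?_ ?_ ?_
  · rintro ⟨A, a⟩ hq
    obtain ⟨ha, hA, hins⟩ := (mem_filter_univ _).1 hq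
    have hAM : #M ≤ #A := hmin A hA
    have hinsM : #(insert a A) ≤ #(insert a A \ M) + #M := by
      rw [card_sdiff_add_card]
      exact card_le_card subset_union_left
    have hinsM' : #(insert a A \ M) ≤ 1 := hsdiff _ hins M hM
    have hcard : #(insert a A) = #A + 1 := card_insert_of_notMem ha
    simp only [mem_product, mem_filter, hA, hins, true_and]
    lia
  · rintro ⟨A, a⟩ hA ⟨B, b⟩ - hAB
    obtain ⟨rfl, hins⟩ := Prod.mk.inj hAB
    exact congrArg (A, ·) ((insert_inj ((mem_filter_univ _).1 hA).1).1 hins)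
  · rintro ⟨A, B⟩ hAB
    simp only [mem_product, mem_filter] at hAB
    obtain ⟨⟨hA, hAM⟩, hB, hBM⟩ := hAB
    have hcov : A ⋖ B := covBy_of_card_sdiff_le_one (hsdiff A hA B hB) (hsdiff B hB A hA)
      (hAM ▸ (hmin B hB).lt_of_ne' hBM)
    obtain ⟨a, ha, rfl⟩ := covBy_iff_exists_insert.1 hcov
    exact ⟨(A, a), (mem_filter_univ _).2 ⟨ha, hA, hB⟩, rfl⟩

-- The sizes of the members of `V` are `#M` and possibly `#M + 1`. If these occur `a` and `b` times,
-- then `a = 1` or `b = 1`, so that `a + b = 1 + a * b`.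
theorem card_eq_one_add_card_insert_pairs
    (hV : V.Nonempty) (hsdiff : ∀ A ∈ V, ∀ B ∈ V, #(A \ B) ≤ 1)
    (hunion : ∀ A ∈ V, ∀ B ∈ V, ¬A ⊆ B → ¬B ⊆ A → A ∪ B ∈ V ∨ A ∩ B ∈ V) :
    #V = 1 + #{q : Finset α × α | q.2 ∉ q.1 ∧ q.1 ∈ V ∧ insert q.2 q.1 ∈ V} := by
  obtain ⟨M, hM, hmin⟩ := exists_min_image V card hV
  rw [card_insert_pairs_eq_mul hsdiff hM hmin, ← card_filter_add_card_filter_not (#· = #M)]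
  have hlower : 0 < #{A ∈ V | #A = #M} := card_pos.2 ⟨M, mem_filter.2 ⟨hM, rfl⟩⟩
  obtain hone | hlt : #{A ∈ V | #A = #M} = 1 ∨ 1 < #{A ∈ V | #A = #M} := by lia
  · rw [hone, one_mul]
  obtain ⟨A, hA, B, hB, hne⟩ := one_lt_card.1 hlt
  rw [mem_filter] at hA hB
  have hAB : ¬A ⊆ B := fun h ↦ hne (eq_of_subset_of_card_le h (hB.2.trans hA.2.symm).le)
  have hBA : ¬B ⊆ A := fun h ↦ hne (eq_of_subset_of_card_le h (hA.2.trans hB.2.symm).le).symm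
  have hinter : A ∩ B ∉ V := fun h ↦
    (card_lt_card (inf_lt_left.2 hAB)).not_ge (hA.2.trans_le (hmin _ h))
  have hAuB : A ∪ B ∈ V := (hunion A hA.1 B hB.1 hAB hBA).resolve_right hinter
  have hupper : {C ∈ V | ¬#C = #M} = {A ∪ B} := by
    refine eq_singleton_iff_unique_mem.2 ⟨mem_filter.2 ⟨hAuB, ?_⟩, fun C hC ↦ ?_⟩
    · exact (hA.2 ▸ card_lt_card (left_lt_sup.2 hBA)).ne'
    rw [mem_filter] at hC
    have hcov {D} (hD : D ∈ V ∧ #D = #M) : D ⋖ C := covBy_of_card_sdiff_le_one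
      (hsdiff D hD.1 C hC.1) (hsdiff C hC.1 D hD.1) (hD.2 ▸ (hmin C hC.1).lt_of_ne' hC.2)
    exact ((hcov hA).wcovBy.sup_eq (hcov hB).wcovBy hne).symm
  rw [hupper, card_singleton, mul_one, add_comm]

end FinsetFamily

section Splitting

variable {α β : Type*} [LinearOrder α] [LinearOrder β] {f : α → β} {A B : Finset α} {x : α}

/-- A skew-merged presentation of `f`: `f` increases on `A` and decreases off `A`. -/
def IsSkewSplitting (f : α → β) (A : Finset α) : Prop :=
  StrictMonoOn f A ∧ StrictAntiOn f (A : Set α)ᶜ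

/-- The increasing part `A` and the decreasing part `Aᶜ` of a splitting can both be continued
through the point `x`. -/
def MeetAt (f : α → β) (A : Finset α) (x : α) : Prop :=
  StrictMonoOn f (insert x (A : Set α)) ∧ StrictAntiOn f (insert x (A : Set α)ᶜ)

theorem MeetAt.isSkewSplitting (h : MeetAt f A x) : IsSkewSplitting f A :=
  ⟨h.1.mono (Set.subset_insert _ _), h.2.mono (Set.subset_insert _ _)⟩

theorem meetAt_iff_isSkewSplitting_insert (hx : x ∉ A) :
    MeetAt f A x ↔ IsSkewSplitting f A ∧ IsSkewSplitting f (insert x A) := by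
  have hcompl : (insert x A : Set α)ᶜ ⊆ (A : Set α)ᶜ :=
    Set.compl_subset_compl.2 (Set.subset_insert _ _)
  have hinsert : insert x (A : Set α)ᶜ = (A : Set α)ᶜ := Set.insert_eq_of_mem hx
  refine ⟨fun h ↦ ⟨h.isSkewSplitting, ?_⟩, fun h ↦ ⟨?_, ?_⟩⟩
  · exact ⟨by simpa using h.1, by simpa using h.isSkewSplitting.2.mono hcompl⟩
  · simpa using h.2.1
  · rw [hinsert]
    exact h.1.2

theorem MeetAt.mem_iff (h : MeetAt f A x) {y : α} (hy : y ≠ x) :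
    y ∈ A ↔ (y < x ↔ f y < f x) := by
  have hx {s : Set α} : x ∈ insert x s := Set.mem_insert _ _
  by_cases hyA : y ∈ A
  · exact iff_of_true hyA (h.1.lt_iff_lt (.inr hyA) hx).symm
  · refine iff_of_false hyA fun hiff ↦ ?_
    rcases lt_or_gt_of_ne hy with hlt | hlt
    · exact (h.2 (.inr hyA) hx hlt).asymm (hiff.1 hlt)
    · exact hlt.asymm (hiff.2 (h.2 hx (.inr hyA) hlt))

theorem MeetAt.congr (h : MeetAt f A x) (hAB : ∀ y ≠ x, y ∈ A ↔ y ∈ B) : MeetAt f B x := by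
  have hins : insert x (B : Set α) = insert x (A : Set α) := by
    ext y; by_cases hy : y = x <;> simp [hy, hAB]
  have hins' : insert x (B : Set α)ᶜ = insert x (A : Set α)ᶜ := by
    ext y; by_cases hy : y = x <;> simp [hy, hAB]
  rwa [MeetAt, hins, hins']

theorem subsingleton_of_strictMonoOn_strictAntiOn {s : Set α} (hmono : StrictMonoOn f s)
    (hanti : StrictAntiOn f s) : s.Subsingleton := by
  intro x hx y hy
  by_contra hne
  rcases lt_or_gt_of_ne hne with h | h
  · exact (hmono hx hy h).asymm (hanti hx hy h)
  · exact (hmono hy hx h).asymm (hanti hy hx h)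

theorem IsSkewSplitting.subsingleton_sdiff (hA : IsSkewSplitting f A) (hB : IsSkewSplitting f B) :
    (A \ B : Set α).Subsingleton :=
  subsingleton_of_strictMonoOn_strictAntiOn (hA.1.mono Set.sdiff_subset)
    (hB.2.mono fun _ h ↦ h.2)

theorem IsSkewSplitting.card_sdiff_le_one (hA : IsSkewSplitting f A) (hB : IsSkewSplitting f B) :
    #(A \ B) ≤ 1 :=
  card_le_one_iff_subsingleton.2 (by simpa using hA.subsingleton_sdiff hB)

theorem strictMonoOn_union {s t : Set α} (hs : StrictMonoOn f s) (ht : StrictMonoOn f t)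
    (hst : ∀ u ∈ s \ t, ∀ v ∈ t \ s, StrictMonoOn f {u, v}) : StrictMonoOn f (s ∪ t) := by
  intro x hx y hy hxy
  by_cases hs' : x ∈ s ∧ y ∈ s
  · exact hs hs'.1 hs'.2 hxy
  by_cases ht' : x ∈ t ∧ y ∈ t
  · exact ht ht'.1 ht'.2 hxy
  obtain ⟨hxs, hyt⟩ | ⟨hyx, hxt⟩ : (x ∈ s \ t ∧ y ∈ t \ s) ∨ (y ∈ s \ t ∧ x ∈ t \ s) := by
    simp only [Set.mem_union, Set.mem_sdiff] at *; tauto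
  · exact hst x hxs y hyt (by simp) (by simp) hxy
  · exact hst y hyx x hxt (by simp) (by simp) hxy

theorem strictAntiOn_union {s t : Set α} (hs : StrictAntiOn f s) (ht : StrictAntiOn f t)
    (hst : ∀ u ∈ s \ t, ∀ v ∈ t \ s, StrictAntiOn f {u, v}) : StrictAntiOn f (s ∪ t) :=
  (strictMonoOn_union hs.dual_right ht.dual_right
    fun u hu v hv ↦ (hst u hu v hv).dual_right).dual_right

theorem strictMonoOn_pair_or_strictAntiOn_pair (hf : f.Injective) (u v : α) :
    StrictMonoOn f {u, v} ∨ StrictAntiOn f {u, v} := by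
  simp only [StrictMonoOn, StrictAntiOn, Set.mem_insert_iff, Set.mem_singleton_iff]
  grind [Function.Injective]

theorem IsSkewSplitting.union_or_inter (hf : f.Injective) (hA : IsSkewSplitting f A)
    (hB : IsSkewSplitting f B) (hAB : ¬A ⊆ B) (hBA : ¬B ⊆ A) :
    IsSkewSplitting f (A ∪ B) ∨ IsSkewSplitting f (A ∩ B) := by
  obtain ⟨u, huA, huB⟩ := not_subset.1 hAB
  obtain ⟨v, hvB, hvA⟩ := not_subset.1 hBA
  have eq_u {w} (hw : w ∈ (A \ B : Set α)) : w = u := hA.subsingleton_sdiff hB hw ⟨huA, huB⟩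
  have eq_v {w} (hw : w ∈ (B \ A : Set α)) : w = v := hB.subsingleton_sdiff hA hw ⟨hvB, hvA⟩
  rcases strictMonoOn_pair_or_strictAntiOn_pair hf u v with huv | huv
  · refine .inl ⟨?_, hA.2.mono (by simp)⟩
    rw [coe_union]
    refine strictMonoOn_union hA.1 hB.1 fun w hw z hz ↦ ?_
    rwa [eq_u hw, eq_v hz]
  · refine .inr ⟨hA.1.mono (by simp), ?_⟩
    rw [coe_inter, Set.compl_inter]
    refine strictAntiOn_union hA.2 hB.2 fun w hw z hz ↦ ?_
    rw [compl_sdiff_compl] at hw hz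
    rwa [eq_v hw, eq_u hz, Set.pair_comm]

variable [Fintype α]

/-- The points in the open lower-left and upper-right quadrants at `(x, f x)`, and `x` itself. -/
def diagonal (f : α → β) (x : α) : Finset α :=
  {y | y < x ↔ f y < f x}

theorem mem_diagonal {y : α} : y ∈ diagonal f x ↔ (y < x ↔ f y < f x) := by
  simp [diagonal]

theorem self_mem_diagonal : x ∈ diagonal f x := by
  simp [mem_diagonal]

/-- `x` is a center of `f` if some splitting meets at `x`; the splitting into the two pairs of
opposite quadrants at `x` is then one of them. -/
def IsCenter (f : α → β) (x : α) : Prop := MeetAt f (diagonal f x) x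

theorem meetAt_iff :
    MeetAt f A x ↔ IsCenter f x ∧ (A = diagonal f x ∨ A = (diagonal f x).erase x) := by
  constructor
  · intro h
    have hA (y) (hy : y ≠ x) : y ∈ A ↔ y ∈ diagonal f x := by rw [h.mem_iff hy, mem_diagonal]
    refine ⟨h.congr hA, ?_⟩
    by_cases hx : x ∈ A
    · left; ext y; by_cases hy : y = x <;> simp [hy, hA, hx, self_mem_diagonal]
    · right; ext y; by_cases hy : y = x <;> simp [hy, hA, hx]
  · rintro ⟨h, rfl | rfl⟩
    · exact h
    · exact h.congr fun y hy ↦ by simp [hy]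

theorem isCenter_iff (hf : f.Injective) :
    IsCenter f x ↔ StrictMonoOn f (diagonal f x \ {x} : Set α) ∧
      StrictAntiOn f (diagonal f x : Set α)ᶜ := by
  constructor
  · exact fun h ↦ ⟨h.isSkewSplitting.1.mono Set.sdiff_subset, h.isSkewSplitting.2⟩
  · rintro ⟨hmono, hanti⟩
    rw [IsCenter, MeetAt, ← Set.insert_sdiff_singleton, strictMonoOn_insert_iff,
      strictAntiOn_insert_iff]
    simp only [Set.mem_sdiff, Set.mem_compl_iff, mem_coe, mem_diagonal, Set.mem_singleton_iff]
    refine ⟨⟨fun y hy ↦ hy.1.1, fun y hy hxy ↦ ?_, hmono⟩, fun y hy hyx ↦ ?_, fun y hy hxy ↦ ?_,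
      hanti⟩
    · exact (not_lt.1 fun h ↦ hxy.not_gt (hy.1.2 h)).lt_of_ne (hf.ne hy.2).symm
    · exact (not_lt.1 fun h ↦ hy (iff_of_true hyx h)).lt_of_ne (hf.ne hyx.ne')
    · exact not_le.1 fun h ↦ hy (iff_of_false hxy.not_gt h.not_gt)

open Classical in
/-- All splittings of `f`. -/
noncomputable def skewSplittings (f : α → β) : Finset (Finset α) :=
  {A | IsSkewSplitting f A}

open Classical in
/-- All centers of `f`. -/
noncomputable def centers (f : α → β) : Finset α :=
  {x | IsCenter f x}

open Classical in
/-- All points at which the splitting `A` of `f` meets. -/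
noncomputable def meetingPoints (f : α → β) (A : Finset α) : Finset α :=
  {x | MeetAt f A x}

@[simp]
theorem mem_skewSplittings : A ∈ skewSplittings f ↔ IsSkewSplitting f A := by
  simp [skewSplittings]

@[simp]
theorem mem_centers : x ∈ centers f ↔ IsCenter f x := by
  simp [centers]

theorem card_insert_pairs_skewSplittings :
    #{q : Finset α × α | q.2 ∉ q.1 ∧ q.1 ∈ skewSplittings f ∧ insert q.2 q.1 ∈ skewSplittings f} =
      #(centers f) := by
  symm
  refine card_bij (fun x _ ↦ ((diagonal f x).erase x, x)) (fun x hx ↦ ?_)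
    (fun x _ y _ h ↦ (Prod.mk.inj h).2) ?_
  · have hx' : x ∉ (diagonal f x).erase x := notMem_erase _ _
    simp only [mem_filter_univ, mem_skewSplittings]
    exact ⟨hx', (meetAt_iff_isSkewSplitting_insert hx').1
      (meetAt_iff.2 ⟨mem_centers.1 hx, .inr rfl⟩)⟩
  · rintro ⟨A, x⟩ hq
    simp only [mem_filter_univ, mem_skewSplittings] at hq
    obtain ⟨hx, hA⟩ := hq
    obtain ⟨hcenter, rfl | rfl⟩ := meetAt_iff.1 ((meetAt_iff_isSkewSplitting_insert hx).2 hA)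
    · exact absurd self_mem_diagonal hx
    · exact ⟨x, mem_centers.2 hcenter, rfl⟩

theorem card_skewSplittings_of_nonempty (hf : f.Injective) (h : (skewSplittings f).Nonempty) :
    #(skewSplittings f) = 1 + #(centers f) := by
  rw [card_eq_one_add_card_insert_pairs h, card_insert_pairs_skewSplittings]
  · simp only [mem_skewSplittings]
    exact fun A hA B hB ↦ hA.card_sdiff_le_one hB
  · simp only [mem_skewSplittings]
    exact fun A hA B hB ↦ hA.union_or_inter hf hB

theorem centers_eq_empty (h : skewSplittings f = ∅) : centers f = ∅ := by
  refine eq_empty_of_forall_notMem fun x hx ↦ ?_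
  have : diagonal f x ∈ skewSplittings f :=
    mem_skewSplittings.2 (MeetAt.isSkewSplitting (mem_centers.1 hx))
  simp [h] at this

theorem sum_card_meetingPoints :
    ∑ A ∈ skewSplittings f, #(meetingPoints f A) = 2 * #(centers f) := by
  classical
  have hpair {x : α} : #{A ∈ skewSplittings f | MeetAt f A x} = if IsCenter f x then 2 else 0 := by
    split_ifs with hx
    · rw [← card_pair (erase_ne_self.2 (self_mem_diagonal (f := f) (x := x))).symm]
      congr 1
      ext A
      simp only [mem_filter, mem_skewSplittings, mem_insert, mem_singleton]
      rw [and_iff_right_of_imp MeetAt.isSkewSplitting, meetAt_iff, and_iff_right hx]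
    · exact card_eq_zero.2 (filter_eq_empty_iff.2 fun A _ h ↦ hx (meetAt_iff.1 h).1)
  calc ∑ A ∈ skewSplittings f, #(meetingPoints f A)
      = ∑ A ∈ skewSplittings f, #{x | MeetAt f A x} := by simp only [meetingPoints]
    _ = ∑ x, #{A ∈ skewSplittings f | MeetAt f A x} :=
      sum_card_bipartiteAbove_eq_sum_card_bipartiteBelow _
    _ = 2 * #(centers f) := by
      simp only [hpair, ← sum_filter, sum_const, smul_eq_mul, centers, mul_comm]

end Splitting

theorem skewMerged_iff {n : ℕ} {π : Equiv.Perm (Fin n)} :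
    SkewMerged π ↔ (skewSplittings π).Nonempty := by
  classical
  constructor
  · rintro ⟨A, hmono, hanti⟩
    refine ⟨A.toFinset, mem_skewSplittings.2 ⟨?_, ?_⟩⟩ <;> rw [Set.coe_toFinset]
    exacts [hmono, hanti]
  · rintro ⟨A, hA⟩
    exact ⟨A, (mem_skewSplittings.1 hA).1, (mem_skewSplittings.1 hA).2⟩

section Slot

variable {n : ℕ} {π : Equiv.Perm (Fin n)} {A : Finset (Fin n)} {p v : Fin (n + 1)} {x : Fin n}

/-- The points in the lower-left and upper-right quadrants at the slot `(p, v)`, which separates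
the positions `x.castSucc < p` from the others and the values `y.castSucc < v` from the others. -/
def slotDiagonal (π : Equiv.Perm (Fin n)) (p v : Fin (n + 1)) : Finset (Fin n) :=
  {x | x.castSucc < p ↔ (π x).castSucc < v}

theorem mem_slotDiagonal : x ∈ slotDiagonal π p v ↔ (x.castSucc < p ↔ (π x).castSucc < v) := by
  simp [slotDiagonal]

/-- Left of the cut `p`, the points of `A` lie below the other points. -/
def LeftAligned (π : Equiv.Perm (Fin n)) (A : Finset (Fin n)) (p : Fin (n + 1)) : Prop :=
  ∀ a ∈ A, ∀ b ∉ A, a.castSucc < p → b.castSucc < p → π a < π b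

/-- Right of the cut `p`, the points of `A` lie above the other points. -/
def RightAligned (π : Equiv.Perm (Fin n)) (A : Finset (Fin n)) (p : Fin (n + 1)) : Prop :=
  ∀ a ∈ A, ∀ b ∉ A, p ≤ a.castSucc → p ≤ b.castSucc → π b < π a

theorem monotone_rightAligned : Monotone (RightAligned π A) :=
  fun _ _ hpq h a ha b hb hpa hpb ↦ h a ha b hb (hpq.trans hpa) (hpq.trans hpb)

theorem exists_castSucc_lt_iff_of_isLowerSet {s : Set (Fin n)} (hs : IsLowerSet s) :
    ∃ v : Fin (n + 1), ∀ y, y.castSucc < v ↔ y ∈ s := by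
  rcases sᶜ.eq_empty_or_nonempty with hempty | hne
  · exact ⟨Fin.last n, fun y ↦ by simp [Set.compl_empty_iff.1 hempty, Fin.castSucc_lt_last]⟩
  · obtain ⟨m, hm, hmin⟩ := sᶜ.toFinite.exists_minimal hne
    refine ⟨m.castSucc, fun y ↦ Fin.castSucc_lt_castSucc_iff.trans ⟨fun hlt ↦ ?_, fun hy ↦ ?_⟩⟩
    · by_contra hy
      exact hlt.not_ge (hmin hy hlt.le)
    · by_contra! hle
      exact hm (hs hle hy)

theorem eq_of_forall_castSucc_lt_iff {v w : Fin (n + 1)}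
    (h : ∀ y : Fin n, y.castSucc < v ↔ y.castSucc < w) : v = w := by
  by_contra hne
  wlog hlt : v < w generalizing v w
  · exact this (fun y ↦ (h y).symm) (Ne.symm hne) (lt_of_le_of_ne' (not_lt.1 hlt) hne)
  have hv : v ≠ Fin.last n := Fin.ne_last_of_lt hlt
  have := h (v.castPred hv)
  simp [hlt] at this

theorem slotDiagonal_injective (π : Equiv.Perm (Fin n)) (p : Fin (n + 1)) :
    (slotDiagonal π p).Injective := by
  intro v w h
  refine eq_of_forall_castSucc_lt_iff fun y ↦ ?_
  have := Finset.ext_iff.1 h (π.symm y)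
  simp only [mem_slotDiagonal, Equiv.apply_symm_apply] at this
  tauto

theorem apply_lt_apply_of_aligned (hA : IsSkewSplitting π A) (hL : LeftAligned π A p)
    (hR : RightAligned π A p) {y : Fin n} (hx : x.castSucc < p ↔ x ∈ A)
    (hy : ¬(y.castSucc < p ↔ y ∈ A)) : π x < π y := by
  rcases lt_or_ge x.castSucc p with hxp | hpx <;> rcases lt_or_ge y.castSucc p with hyp | hpy
  · exact hL x (hx.1 hxp) y (fun h ↦ hy (iff_of_true hyp h)) hxp hyp
  · have hyA : y ∈ A := by simpa [hpy.not_gt] using hy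
    exact hA.1 (hx.1 hxp) hyA (hxp.trans_le hpy)
  · have hxA : x ∉ A := fun h ↦ hpx.not_gt (hx.2 h)
    have hyA : y ∉ A := fun h ↦ hy (iff_of_true hyp h)
    exact hA.2 hyA hxA (hyp.trans_le hpx)
  · have hxA : x ∉ A := fun h ↦ hpx.not_gt (hx.2 h)
    have hyA : y ∈ A := by simpa [hpy.not_gt] using hy
    exact hR y hyA x hxA hpy hpx

theorem exists_slotDiagonal_eq_iff (hA : IsSkewSplitting π A) :
    (∃ v, slotDiagonal π p v = A) ↔ LeftAligned π A p ∧ RightAligned π A p := by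
  constructor
  · rintro ⟨v, rfl⟩
    simp only [LeftAligned, RightAligned, mem_slotDiagonal]
    refine ⟨fun a ha b hb hap hbp ↦ ?_, fun a ha b hb hpa hpb ↦ ?_⟩
    · have hbv : v ≤ (π b).castSucc := not_lt.1 fun h ↦ hb (iff_of_true hbp h)
      exact (ha.1 hap).trans_le hbv
    · have hav : v ≤ (π a).castSucc := not_lt.1 fun h ↦ hpa.not_gt (ha.2 h)
      have hbv : (π b).castSucc < v := not_le.1 fun h ↦ hb (iff_of_false hpb.not_gt h.not_gt)
      exact hbv.trans_le hav
  · rintro ⟨hL, hR⟩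
    have hlower : IsLowerSet {y | (π.symm y).castSucc < p ↔ π.symm y ∈ A} := by
      intro y z hzy hy
      by_contra hz
      simpa [hzy.not_gt] using apply_lt_apply_of_aligned hA hL hR hy hz
    obtain ⟨v, hv⟩ := exists_castSucc_lt_iff_of_isLowerSet hlower
    refine ⟨v, ext fun x ↦ ?_⟩
    rw [mem_slotDiagonal, hv]
    simp only [Set.mem_ofPred_eq, Equiv.symm_apply_apply]
    tauto

theorem leftAligned_succ_or_rightAligned_castSucc (hA : IsSkewSplitting π A) (x : Fin n) :
    LeftAligned π A x.succ ∨ RightAligned π A x.castSucc := by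
  by_contra! h
  simp only [LeftAligned, RightAligned, not_forall] at h
  simp only [Fin.castSucc_lt_succ_iff, Fin.castSucc_le_castSucc_iff, not_lt] at h
  obtain ⟨⟨a, ha, b, hb, hax, hbx, hba⟩, a', ha', b', hb', hxa', hxb', hab'⟩ := h
  have hb_le : π b' ≤ π b := (hA.2.antitoneOn hb hb' (hbx.trans hxb'))
  have ha_le : π a ≤ π a' := (hA.1.monotoneOn ha ha' (hax.trans hxa'))
  have hne : a' ≠ b' := fun h ↦ hb' (h ▸ ha')
  have heq : a' = b' := π.injective (le_antisymm hab' (hb_le.trans (hba.trans ha_le)))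
  exact hne heq

theorem meetAt_iff_leftAligned_rightAligned (hA : IsSkewSplitting π A) :
    MeetAt π A x ↔ LeftAligned π A x.succ ∧ RightAligned π A x.castSucc := by
  constructor
  · rintro ⟨hmono, hanti⟩
    have hx {s : Set (Fin n)} : x ∈ insert x s := Set.mem_insert _ _
    refine ⟨fun a ha b hb hax hbx ↦ ?_, fun a ha b hb hxa hxb ↦ ?_⟩
    · refine lt_of_le_of_ne ?_ (π.injective.ne (ne_of_mem_of_not_mem ha hb))
      exact (hmono.monotoneOn (.inr ha) hx (Fin.castSucc_lt_succ_iff.1 hax)).trans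
        (hanti.antitoneOn (.inr hb) hx (Fin.castSucc_lt_succ_iff.1 hbx))
    · refine lt_of_le_of_ne' ?_ (π.injective.ne (ne_of_mem_of_not_mem ha hb))
      exact (hanti.antitoneOn hx (.inr hb) hxb).trans (hmono.monotoneOn hx (.inr ha) hxa)
  · rintro ⟨hL, hR⟩
    simp only [LeftAligned, RightAligned, Fin.castSucc_lt_succ_iff,
      Fin.castSucc_le_castSucc_iff] at hL hR
    by_cases hx : x ∈ A
    · rw [MeetAt, Set.insert_eq_of_mem (mem_coe.2 hx), strictAntiOn_insert_iff]
      exact ⟨hA.1, fun b hb hbx ↦ hL x hx b hb le_rfl hbx.le,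
        fun b hb hxb ↦ hR x hx b hb le_rfl hxb.le, hA.2⟩
    · have hxc : x ∈ (A : Set (Fin n))ᶜ := hx
      rw [MeetAt, Set.insert_eq_of_mem hxc, strictMonoOn_insert_iff]
      exact ⟨⟨fun a ha hax ↦ hL a ha x hx hax.le le_rfl,
        fun a ha hxa ↦ hR a ha x hx hxa.le le_rfl, hA.1⟩, hA.2⟩

theorem card_filter_and_eq_one_add {L R : Fin (n + 1) → Prop} [DecidablePred L]
    [DecidablePred R] (h0 : L 0) (hlast : R (Fin.last n)) (hR : Monotone R)
    (hLR : ∀ x : Fin n, L x.succ ∨ R x.castSucc) :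
    #{p | L p ∧ R p} = 1 + #{x : Fin n | L x.succ ∧ R x.castSucc} := by
  have hcardL : #{p | L p} = #{x : Fin n | L x.succ} + 1 := by
    rw [Fin.card_filter_univ_succ, if_pos h0]
  have hcardR : #{p | R p} = #{x : Fin n | R x.castSucc} + 1 := by
    rw [Fin.univ_castSuccEmb, filter_cons_of_pos _ _ _ _ hlast, card_cons, filter_map, card_map]
    rfl
  have hor (p) : L p ∨ R p := by
    induction p using Fin.cases with
    | zero => exact .inl h0
    | succ x => exact (hLR x).imp_right (hR x.castSucc_le_succ)
  have hcuts := card_union_add_card_inter {p | L p} {p | R p}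
  have hpoints := card_union_add_card_inter {x : Fin n | L x.succ} {x | R x.castSucc}
  simp only [← filter_or, ← filter_and, hor, hLR, filter_true, card_univ, Fintype.card_fin]
    at hcuts hpoints
  lia

theorem card_slots_eq (hA : IsSkewSplitting π A) :
    #{q : Fin (n + 1) × Fin (n + 1) | slotDiagonal π q.1 q.2 = A} =
      1 + #(meetingPoints π A) := by
  classical
  calc #{q : Fin (n + 1) × Fin (n + 1) | slotDiagonal π q.1 q.2 = A}
      = #{p | LeftAligned π A p ∧ RightAligned π A p} := by
        refine card_bij (fun q _ ↦ q.1) (fun q hq ↦ ?_) ?_ (fun p hp ↦ ?_)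
        · rw [mem_filter_univ] at hq ⊢
          exact (exists_slotDiagonal_eq_iff hA).1 ⟨q.2, hq⟩
        · rintro ⟨p, v⟩ hv ⟨_, w⟩ hw rfl
          rw [mem_filter_univ] at hv hw
          exact congrArg (p, ·) (slotDiagonal_injective π p (hv.trans hw.symm))
        · obtain ⟨v, hv⟩ := (exists_slotDiagonal_eq_iff hA).2 ((mem_filter_univ p).1 hp)
          exact ⟨(p, v), (mem_filter_univ _).2 hv, rfl⟩
    _ = 1 + #{x : Fin n | LeftAligned π A x.succ ∧ RightAligned π A x.castSucc} :=
        card_filter_and_eq_one_add (fun a _ b _ ha ↦ absurd ha (Fin.not_lt_zero _))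
          (fun a _ b _ ha ↦ absurd ha (Fin.castSucc_lt_last a).not_ge) monotone_rightAligned
          (leftAligned_succ_or_rightAligned_castSucc hA)
    _ = 1 + #(meetingPoints π A) := by
        simp only [meetingPoints, meetAt_iff_leftAligned_rightAligned hA]

theorem card_slots_mem_skewSplittings (π : Equiv.Perm (Fin n)) :
    #{q : Fin (n + 1) × Fin (n + 1) | slotDiagonal π q.1 q.2 ∈ skewSplittings π} =
      #(skewSplittings π) + 2 * #(centers π) := by
  refine (card_eq_sum_card_fiberwise (f := fun q : Fin (n + 1) × Fin (n + 1) ↦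
    slotDiagonal π q.1 q.2) (t := skewSplittings π) fun q hq ↦ (mem_filter_univ q).1 hq).trans ?_
  rw [← sum_card_meetingPoints, card_eq_sum_ones, ← sum_add_distrib]
  refine sum_congr rfl fun A hA ↦ ?_
  rw [← card_slots_eq (mem_skewSplittings.1 hA), filter_filter]
  congr 1
  refine filter_congr fun q _ ↦ and_iff_right_of_imp ?_
  rintro rfl
  exact hA

end Slot

section Insertion

variable {n : ℕ}

/-- The permutation of `Fin (n + 1)` obtained from `π` by inserting the value `v` at the
position `p`. -/
def insertPoint (π : Equiv.Perm (Fin n)) (p v : Fin (n + 1)) : Equiv.Perm (Fin (n + 1)) :=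
  ((finSuccEquiv' p).trans (Equiv.optionCongr π)).trans (finSuccEquiv' v).symm

variable {π : Equiv.Perm (Fin n)} {p v : Fin (n + 1)}

@[simp]
theorem insertPoint_self : insertPoint π p v p = v := by
  simp [insertPoint]

@[simp]
theorem insertPoint_succAbove (x : Fin n) :
    insertPoint π p v (p.succAbove x) = v.succAbove (π x) := by
  simp [insertPoint]

theorem bijective_insertPoint : Function.Bijective
    fun q : Equiv.Perm (Fin n) × Fin (n + 1) × Fin (n + 1) ↦
      (insertPoint q.1 q.2.1 q.2.2, q.2.1) := by
  refine (Fintype.bijective_iff_injective_and_card _).2 ⟨?_, ?_⟩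
  · rintro ⟨π, p, v⟩ ⟨σ, p', w⟩ h
    obtain ⟨hins, rfl : p = p'⟩ := Prod.mk.inj h
    obtain rfl : v = w := by simpa using DFunLike.congr_fun hins p
    have hπσ : π = σ := Equiv.ext fun x ↦ by simpa using DFunLike.congr_fun hins (p.succAbove x)
    rw [hπσ]
  · simp only [Fintype.card_prod, Fintype.card_perm, Fintype.card_fin, Nat.factorial_succ]
    ring

theorem isCenter_insertPoint :
    IsCenter (insertPoint π p v) p ↔ IsSkewSplitting π (slotDiagonal π p v) := by
  have hdiag (x : Fin n) : p.succAbove x ∈ diagonal (insertPoint π p v) p ↔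
      x ∈ slotDiagonal π p v := by
    simp only [mem_diagonal, mem_slotDiagonal, insertPoint_self, insertPoint_succAbove,
      Fin.succAbove_lt_iff_castSucc_lt]
  have hoff : (diagonal (insertPoint π p v) p \ {p} : Set (Fin (n + 1))) =
      p.succAbove '' slotDiagonal π p v := by
    ext y
    rcases Fin.eq_self_or_eq_succAbove p y with rfl | ⟨x, rfl⟩ <;> simp [hdiag]
  have hcompl : (diagonal (insertPoint π p v) p : Set (Fin (n + 1)))ᶜ =
      p.succAbove '' (slotDiagonal π p v : Set (Fin n))ᶜ := by
    ext y
    rcases Fin.eq_self_or_eq_succAbove p y with rfl | ⟨x, rfl⟩ <;> simp [hdiag, self_mem_diagonal]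
  rw [isCenter_iff (insertPoint π p v).injective, hoff, hcompl]
  simp [IsSkewSplitting, StrictMonoOn, StrictAntiOn]

theorem sum_card_centers_succ (n : ℕ) :
    ∑ π : Equiv.Perm (Fin (n + 1)), #(centers π) =
      ∑ π : Equiv.Perm (Fin n), (#(skewSplittings π) + 2 * #(centers π)) := by
  classical
  calc ∑ π : Equiv.Perm (Fin (n + 1)), #(centers π)
      = ∑ r : Equiv.Perm (Fin (n + 1)) × Fin (n + 1), if IsCenter r.1 r.2 then 1 else 0 := by
        simp only [Fintype.sum_prod_type, centers, card_filter]
    _ = ∑ q : Equiv.Perm (Fin n) × Fin (n + 1) × Fin (n + 1),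
          if slotDiagonal q.1 q.2.1 q.2.2 ∈ skewSplittings q.1 then 1 else 0 := by
        refine (bijective_insertPoint.sum_comp _).symm.trans (sum_congr rfl fun q _ ↦ ?_)
        simp only [isCenter_insertPoint, mem_skewSplittings]
    _ = ∑ π : Equiv.Perm (Fin n), (#(skewSplittings π) + 2 * #(centers π)) := by
        rw [Fintype.sum_prod_type]
        simp only [← card_filter, card_slots_mem_skewSplittings]

end Insertion

section CentralBinom

theorem eqOn_of_strictMonoOn_of_image_eq {α β : Type*} [LinearOrder α] [WellFoundedLT α]
    [Preorder β] {f g : α → β} {s : Set α} (hf : StrictMonoOn f s) (hg : StrictMonoOn g s)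
    (h : f '' s = g '' s) : s.EqOn f g := by
  rw [Set.image_eq_range, Set.image_eq_range] at h
  have hfg : (fun x : s ↦ f x) = fun x : s ↦ g x :=
    (StrictMono.range_inj (strictMono_domRestrict.2 hf) (strictMono_domRestrict.2 hg)).1 h
  exact fun x hx ↦ congrFun hfg ⟨x, hx⟩

theorem nonempty_orderIso_of_card_eq {α β : Type*} [Fintype α] [Fintype β] [LinearOrder α]
    [LinearOrder β] (h : Fintype.card α = Fintype.card β) : Nonempty (α ≃o β) :=
  ⟨(monoEquivOfFin α h).symm.trans (monoEquivOfFin β rfl)⟩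

variable {α : Type*} [LinearOrder α] {π σ : Equiv.Perm α} {A B : Finset α}

theorem IsSkewSplitting.perm_eq [Finite α] (hπ : IsSkewSplitting π A) (hσ : IsSkewSplitting σ A)
    (h : A.image π = A.image σ) : π = σ := by
  have himage : π '' A = σ '' A := by simpa using congrArg ((↑) : Finset α → Set α) h
  have hcompl : π '' (A : Set α)ᶜ = σ '' (A : Set α)ᶜ := by
    rw [Set.image_compl_eq π.bijective, Set.image_compl_eq σ.bijective, himage]
  refine Equiv.ext fun x ↦ ?_
  by_cases hx : x ∈ A
  · exact eqOn_of_strictMonoOn_of_image_eq hπ.1 hσ.1 himage hx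
  · exact eqOn_of_strictMonoOn_of_image_eq (β := αᵒᵈ) hπ.2.dual_right hσ.2.dual_right hcompl hx

theorem exists_perm_isSkewSplitting [Finite α] (h : #B = #A) :
    ∃ π : Equiv.Perm α, IsSkewSplitting π A ∧ A.image π = B := by
  have := Fintype.ofFinite α
  obtain ⟨e⟩ : Nonempty ({x // x ∈ A} ≃o {x // x ∈ B}) :=
    nonempty_orderIso_of_card_eq (by simp [h])
  obtain ⟨e'⟩ : Nonempty ({x // x ∉ A} ≃o {x // x ∉ B}ᵒᵈ) :=
    nonempty_orderIso_of_card_eq (by simp [Fintype.card_subtype_compl, h])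
  let π : Equiv.Perm α := Equiv.subtypeCongr e.toEquiv (e'.toEquiv.trans OrderDual.ofDual)
  have hmem {x} (hx : x ∈ A) : π x = e ⟨x, hx⟩ := by
    simp [π, Equiv.subtypeCongr, Equiv.sumCompl_symm_apply_of_pos, hx]
  have hnotMem {x} (hx : x ∉ A) : π x = OrderDual.ofDual (e' ⟨x, hx⟩) := by
    simp [π, Equiv.subtypeCongr, Equiv.sumCompl_symm_apply_of_neg, hx]
  refine ⟨π, ⟨fun x hx y hy hxy ↦ ?_, fun x hx y hy hxy ↦ ?_⟩, ?_⟩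
  · rw [hmem hx, hmem hy]
    exact e.strictMono (Subtype.mk_lt_mk.2 hxy)
  · rw [hnotMem hx, hnotMem hy]
    exact e'.strictMono (Subtype.mk_lt_mk.2 hxy)
  · refine eq_of_subset_of_card_le (image_subset_iff.2 fun x hx ↦ ?_) ?_
    · rw [hmem hx]
      exact (e ⟨x, hx⟩).2
    · rw [card_image_of_injective _ π.injective, h]

variable [Fintype α]

theorem card_perm_isSkewSplitting (A : Finset α) :
    #{π : Equiv.Perm α | A ∈ skewSplittings π} = (Fintype.card α).choose #A := by
  rw [← card_univ, ← card_powersetCard]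
  refine card_bij (fun π _ ↦ A.image π) (fun π _ ↦ ?_) (fun π hπ σ hσ h ↦ ?_) fun B hB ↦ ?_
  · exact mem_powersetCard.2 ⟨subset_univ _, card_image_of_injective _ π.injective⟩
  · rw [mem_filter_univ, mem_skewSplittings] at hπ hσ
    exact hπ.perm_eq hσ h
  · obtain ⟨π, hπ, rfl⟩ := exists_perm_isSkewSplitting (mem_powersetCard.1 hB).2
    exact ⟨π, (mem_filter_univ π).2 (mem_skewSplittings.2 hπ), rfl⟩

theorem sum_card_skewSplittings :
    ∑ π : Equiv.Perm α, #(skewSplittings π) = (Fintype.card α).centralBinom := by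
  calc ∑ π : Equiv.Perm α, #(skewSplittings π)
      = ∑ π : Equiv.Perm α, #{A | A ∈ skewSplittings π} := by simp only [filter_univ_mem]
    _ = ∑ A : Finset α, #{π : Equiv.Perm α | A ∈ skewSplittings π} :=
      sum_card_bipartiteAbove_eq_sum_card_bipartiteBelow _
    _ = ∑ A : Finset α, (Fintype.card α).choose #A := by simp only [card_perm_isSkewSplitting]
    _ = ∑ k ∈ range (Fintype.card α + 1), (Fintype.card α).choose k ^ 2 := by
      rw [← powerset_univ, sum_powerset_apply_card (fun k ↦ (Fintype.card α).choose k)]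
      simp [sq]
    _ = (Fintype.card α).centralBinom := Nat.sum_range_choose_sq _

end CentralBinom

section Counting

/-- The number of pairs of a permutation of length `n` and one of its centers. -/
noncomputable def centerCount (n : ℕ) : ℕ :=
  ∑ π : Equiv.Perm (Fin n), #(centers π)

theorem centerCount_zero : centerCount 0 = 0 :=
  sum_eq_zero fun _ _ ↦ card_eq_zero.2 (eq_empty_of_isEmpty _)

theorem centerCount_succ (n : ℕ) :
    centerCount (n + 1) = n.centralBinom + 2 * centerCount n := by
  rw [centerCount, sum_card_centers_succ, sum_add_distrib, ← mul_sum, sum_card_skewSplittings,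
    Fintype.card_fin, centerCount]

open Classical in
theorem card_skewSplittings {n : ℕ} (π : Equiv.Perm (Fin n)) :
    #(skewSplittings π) = (if SkewMerged π then 1 else 0) + #(centers π) := by
  split_ifs with h
  · exact card_skewSplittings_of_nonempty π.injective (skewMerged_iff.1 h)
  · have hempty : skewSplittings π = ∅ := not_nonempty_iff_eq_empty.1 (mt skewMerged_iff.2 h)
    simp only [hempty, centers_eq_empty hempty, card_empty]

theorem card_skewMerged_add_centerCount (n : ℕ) :
    Nat.card {π : Equiv.Perm (Fin n) // SkewMerged π} + centerCount n = n.centralBinom := by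
  classical
  rw [Nat.card_eq_fintype_card, Fintype.card_subtype, card_filter, centerCount,
    ← sum_add_distrib, ← Fintype.card_fin n, ← sum_card_skewSplittings, Fintype.card_fin]
  exact sum_congr rfl fun π _ ↦ (card_skewSplittings π).symm

end Counting

section GeneratingFunction

theorem ringChoose_neg_half_mul_pow (n : ℕ) :
    Ring.choose (-(1 / 2) : ℝ) n * (-4) ^ n = n.centralBinom := by
  induction n with
  | zero => simp
  | succ n ih =>
    have hchoose : (n + 1) * Ring.choose (-(1 / 2) : ℝ) (n + 1) =
        Ring.choose (-(1 / 2) : ℝ) n * (-(1 / 2) - n) := by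
      simpa using Ring.choose_smul_choose (-(1 / 2) : ℝ) n.le_succ
    have hcentral : ((n : ℝ) + 1) * (n + 1).centralBinom = 2 * (2 * n + 1) * n.centralBinom := by
      exact_mod_cast Nat.succ_mul_centralBinom_succ n
    refine mul_left_cancel₀ n.cast_add_one_ne_zero ?_
    rw [hcentral, ← ih, pow_succ]
    linear_combination ((-4) ^ n * (-4)) * hchoose

theorem hasSum_centralBinom_mul_pow {x : ℝ} (hx : |x| < 1 / 4) :
    HasSum (fun n : ℕ ↦ (n.centralBinom : ℝ) * x ^ n) (1 / √(1 - 4 * x)) := by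
  have hball : -4 * x ∈ Metric.eball (0 : ℝ) 1 := by
    rw [Metric.mem_eball, edist_zero_right, ← ofReal_norm, Real.norm_eq_abs, ENNReal.ofReal_lt_one,
      abs_mul, abs_neg, abs_of_pos four_pos]
    linarith
  have hseries := (Real.one_add_rpow_hasFPowerSeriesOnBall_zero (a := -(1 / 2))).hasSum hball
  have hpos : 0 < 1 - 4 * x := by linarith [(abs_lt.1 hx).2]
  convert! hseries using 1
  · ext n
    rw [binomialSeries_apply, ← ringChoose_neg_half_mul_pow, mul_assoc, ← mul_pow]
    simp [List.ofFn_const]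
  · rw [zero_add, Real.rpow_neg (by linarith), ← Real.sqrt_eq_rpow, one_div, neg_mul,
      ← sub_eq_add_neg]

theorem hasSum_mul_pow_of_linear_recurrence {K : Type*} [Field K] [TopologicalSpace K]
    [IsTopologicalRing K] [T2Space K] {c e : ℕ → K} {r x C : K} (he0 : e 0 = 0)
    (hrec : ∀ n, e (n + 1) = c n + r * e n) (hrx : 1 - r * x ≠ 0)
    (hc : HasSum (fun n ↦ c n * x ^ n) C) (he : Summable fun n ↦ e n * x ^ n) :
    HasSum (fun n ↦ e n * x ^ n) (x * C / (1 - r * x)) := by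
  obtain ⟨E, hE⟩ := he
  have hshift : HasSum (fun n ↦ e (n + 1) * x ^ (n + 1)) (x * C + r * x * E) :=
    ((hc.mul_left x).add (hE.mul_left (r * x))).congr_fun fun n ↦ by rw [hrec]; ring
  have hE' : HasSum (fun n ↦ e n * x ^ n) (x * C + r * x * E) := by
    rw [← hasSum_nat_add_iff' 1]
    simpa [he0] using hshift
  have hEq : E = x * C / (1 - r * x) := by
    rw [eq_div_iff hrx]
    linear_combination hE.unique hE'
  exact hEq ▸ hE

theorem summable_centerCount_mul_pow {x : ℝ} (hx : |x| < 1 / 4) :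
    Summable fun n ↦ (centerCount n : ℝ) * x ^ n := by
  have hx' : |(|x|)| < 1 / 4 := by rwa [abs_abs]
  refine (hasSum_centralBinom_mul_pow hx').summable.of_norm_bounded fun n ↦ ?_
  rw [norm_mul, norm_pow, Real.norm_eq_abs, Real.norm_eq_abs, Nat.abs_cast]
  gcongr
  exact (Nat.le_add_left _ _).trans_eq (card_skewMerged_add_centerCount n)

theorem hasSum_centerCount_mul_pow {x : ℝ} (hx : |x| < 1 / 4) :
    HasSum (fun n ↦ (centerCount n : ℝ) * x ^ n) (x * (1 / √(1 - 4 * x)) / (1 - 2 * x)) := by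
  refine hasSum_mul_pow_of_linear_recurrence (by simp [centerCount_zero])
    (fun n ↦ by simp [centerCount_succ]) ?_ (hasSum_centralBinom_mul_pow hx)
    (summable_centerCount_mul_pow hx)
  linarith [(abs_lt.1 hx).2]

end GeneratingFunction

/-- **Theorem (Atkinson).** The generating function of the class of skew-merged permutations
is `(1 - 3x) / ((1 - 2x) √(1 - 4x))`. -/
theorem skewMerged_generating_function :
    ∀ x : ℝ, |x| < 1 / 4 →
      ∑' n : ℕ, (Nat.card {π : Equiv.Perm (Fin n) // SkewMerged π} : ℝ) * x ^ n =
        (1 - 3 * x) / ((1 - 2 * x) * Real.sqrt (1 - 4 * x)) := by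
  intro x hx
  have hx4 : 0 < 1 - 4 * x := by linarith [(abs_lt.1 hx).2]
  have hx2 : 1 - 2 * x ≠ 0 := by linarith [(abs_lt.1 hx).2]
  have hT := hasSum_centralBinom_mul_pow hx
  have hE := hasSum_centerCount_mul_pow hx
  have hS (n : ℕ) : (Nat.card {π : Equiv.Perm (Fin n) // SkewMerged π} : ℝ) * x ^ n =
      n.centralBinom * x ^ n - centerCount n * x ^ n := by
    rw [← card_skewMerged_add_centerCount]
    push_cast
    ring
  calc ∑' n : ℕ, (Nat.card {π : Equiv.Perm (Fin n) // SkewMerged π} : ℝ) * x ^ n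
      = 1 / √(1 - 4 * x) - x * (1 / √(1 - 4 * x)) / (1 - 2 * x) := by
        simpa only [hS] using (hT.sub hE).tsum_eq
    _ = (1 - 3 * x) / ((1 - 2 * x) * √(1 - 4 * x)) := by
        have hsqrt : √(1 - 4 * x) ≠ 0 := (Real.sqrt_pos.2 hx4).ne'
        rw [mul_one_div, div_div, mul_comm √_, div_sub_div _ _ hsqrt (mul_ne_zero hx2 hsqrt),
          div_eq_div_iff (by positivity) (by positivity)]
        ring
end

section
/- A permutation class C is griddable (i.e., contained in Grid(M) for some matrix M with entries in {0, 1, −1}) if and only if there exist a and b such that C contains neither the skew sum of a+1 copies of 12 nor the direct sum of b+1 copies of 21. -/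
/-- `σ ≤ π`: the permutation `π` contains the pattern `σ`, i.e. `π` has a subsequence
in the same relative order as `σ`. -/
def PermContains {k n : ℕ} (σ : Equiv.Perm (Fin k)) (π : Equiv.Perm (Fin n)) : Prop :=
  ∃ f : Fin k → Fin n, StrictMono f ∧ ∀ i j : Fin k, σ i < σ j ↔ π (f i) < π (f j)

/-- A permutation class: a set of permutations (of each length) closed downward
under the containment order. -/
def IsPermClass (C : ∀ n : ℕ, Set (Equiv.Perm (Fin n))) : Prop :=
  ∀ (k n : ℕ) (σ : Equiv.Perm (Fin k)) (π : Equiv.Perm (Fin n)),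
    π ∈ C n → PermContains σ π → σ ∈ C k
/-- The point `i` (with value `π i`) lies in the block of the gridding `(c, r)`
indexed by column `k` and row `l`. -/
def InBlock {n t u : ℕ} (π : Equiv.Perm (Fin n)) (c : Fin (t + 1) → ℕ) (r : Fin (u + 1) → ℕ)
    (k : Fin t) (l : Fin u) (i : Fin n) : Prop :=
  c k.castSucc ≤ (i : ℕ) ∧ (i : ℕ) < c k.succ ∧
    r l.castSucc ≤ (π i : ℕ) ∧ (π i : ℕ) < r l.succ

/-- `(c, r)` is an `M`-gridding of `π`: each block is increasing, decreasing or empty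
according to the corresponding entry of the `t × u` matrix `M` (entries in {0, 1, -1},
columns indexed by `Fin t`, rows by `Fin u`). -/
def IsGridding {n t u : ℕ} (M : Fin t → Fin u → SignType) (π : Equiv.Perm (Fin n))
    (c : Fin (t + 1) → ℕ) (r : Fin (u + 1) → ℕ) : Prop :=
  Monotone c ∧ Monotone r ∧ c 0 = 0 ∧ c (Fin.last t) = n ∧ r 0 = 0 ∧ r (Fin.last u) = n ∧
    ∀ (k : Fin t) (l : Fin u),
      (M k l = 1 → ∀ i j : Fin n,
        InBlock π c r k l i → InBlock π c r k l j → i < j → π i < π j) ∧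
      (M k l = -1 → ∀ i j : Fin n,
        InBlock π c r k l i → InBlock π c r k l j → i < j → π j < π i) ∧
      (M k l = 0 → ∀ i : Fin n, ¬ InBlock π c r k l i)

/-- `π ∈ Grid(M)`: the permutation `π` possesses an `M`-gridding. -/
def InGrid {n t u : ℕ} (M : Fin t → Fin u → SignType) (π : Equiv.Perm (Fin n)) : Prop :=
  ∃ c r, IsGridding M π c r
/-- The direct sum `π ⊕ σ` of two permutations. -/
def dsum {m n : ℕ} (π : Equiv.Perm (Fin m)) (σ : Equiv.Perm (Fin n)) :
    Equiv.Perm (Fin (m + n)) :=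
  finSumFinEquiv.symm.trans ((Equiv.sumCongr π σ).trans finSumFinEquiv)

/-- The skew sum `π ⊖ σ` of two permutations. -/
def sksum {m n : ℕ} (π : Equiv.Perm (Fin m)) (σ : Equiv.Perm (Fin n)) :
    Equiv.Perm (Fin (m + n)) :=
  finSumFinEquiv.symm.trans ((Equiv.sumCongr π σ).trans
    ((Equiv.sumComm (Fin m) (Fin n)).trans (finSumFinEquiv.trans (finCongr (Nat.add_comm n m)))))

/-- The direct sum `σ ⊕ σ ⊕ ⋯ ⊕ σ` of `k` copies of `σ`. -/
def oplusIter {m : ℕ} (σ : Equiv.Perm (Fin m)) : (k : ℕ) → Equiv.Perm (Fin (m * k))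
  | 0 => 1
  | k + 1 => (finCongr (by ring : m + m * k = m * (k + 1))).permCongr (dsum σ (oplusIter σ k))

/-- The skew sum `σ ⊖ σ ⊖ ⋯ ⊖ σ` of `k` copies of `σ`. -/
def ominusIter {m : ℕ} (σ : Equiv.Perm (Fin m)) : (k : ℕ) → Equiv.Perm (Fin (m * k))
  | 0 => 1
  | k + 1 => (finCongr (by ring : m + m * k = m * (k + 1))).permCongr (sksum σ (ominusIter σ k))

/-- The permutation `12`. -/
def p12 : Equiv.Perm (Fin 2) := 1

/-- The permutation `21`. -/
def p21 : Equiv.Perm (Fin 2) := Equiv.swap 0 1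

/-!
A gridding colours positions and values monotonically with boundedly many colours. If `π` contains
more copies of `21` in a direct sum than there are choices of colours, two of the copies have the
same colours; then one cell contains both a descent and an ascent, so it is not monotone. Skew sums
of `12` are reduced to this case by taking complements.

Conversely, a permutation avoiding long sums is cut into boundedly many monotone pieces, by
induction on the lengths `a` and `b` of the avoided sums. For each horizontal line `h` move a
vertical line `v` as far right as the quadrant to its north-west stays decreasing, and choose the
last `h` for which the quadrant to the south-west is then increasing. The south-east quadrant at `h`
lies below and to the right of an ascent, so it avoids a skew sum one shorter than the original;
the north-east quadrant at `h + 1` lies above and to the right of a descent, so it avoids a direct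
sum one shorter. The other two quadrants are monotone.

The bounded number of lines leaves finitely many sign matrices, and a single matrix whose columns
repeat all possible columns of signs sufficiently often contains them all.
-/

/-! ### Direct sums -/

lemma finProdFinEquiv_lt_iff {m n : ℕ} {j j' : Fin m} {i i' : Fin n} :
    finProdFinEquiv (j, i) < finProdFinEquiv (j', i') ↔ j < j' ∨ j = j' ∧ i < i' := by
  simp only [Fin.lt_def, finProdFinEquiv_apply_val, Fin.ext_iff]
  rcases lt_trichotomy (j : ℕ) j' with h | h | h
  · have : n * (j + 1) ≤ n * j' := Nat.mul_le_mul_left n h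
    grind
  · simp [h]
  · have : n * (j' + 1) ≤ n * j := Nat.mul_le_mul_left n h
    grind

/-- The positions (or values) of a sum of `k` permutations of length `m`: `(j, i)` stands for
entry `i` of summand `j`. -/
def blockEquiv (k m : ℕ) : Fin k × Fin m ≃ Fin (m * k) :=
  finProdFinEquiv.trans (finCongr (mul_comm k m))

lemma blockEquiv_lt_iff {k m : ℕ} {j j' : Fin k} {i i' : Fin m} :
    blockEquiv k m (j, i) < blockEquiv k m (j', i') ↔ j < j' ∨ j = j' ∧ i < i' := by
  rw [← finProdFinEquiv_lt_iff]
  rfl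

lemma oplusIter_blockEquiv {m : ℕ} (σ : Equiv.Perm (Fin m)) {k : ℕ} (j : Fin k) (i : Fin m) :
    oplusIter σ k (blockEquiv k m (j, i)) = blockEquiv k m (j, σ i) := by
  induction k with
  | zero => exact j.elim0
  | succ k ih =>
    have zero_block (i : Fin m) :
        blockEquiv (k + 1) m (0, i) = (Fin.castAdd (m * k) i).cast (by ring) := by
      ext
      simp [blockEquiv]
    have succ_block (j : Fin k) (i : Fin m) : blockEquiv (k + 1) m (j.succ, i) =
        (Fin.natAdd m (blockEquiv k m (j, i))).cast (by ring) := by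
      ext
      simp only [blockEquiv, Equiv.trans_apply, finCongr_apply, Fin.val_cast,
        finProdFinEquiv_apply_val, Fin.val_succ, Fin.cast_natAdd, Fin.val_addNat]
      ring
    cases j using Fin.cases with
    | zero => simp [oplusIter, zero_block, dsum]
    | succ j => simp [oplusIter, succ_block, dsum, ih]

/-- `g` embeds the pattern `σ` into `π`; thus `PermContains σ π` says that some `g` does. -/
def IsOccurrence {k n : ℕ} (σ : Equiv.Perm (Fin k)) (π : Equiv.Perm (Fin n))
    (g : Fin k → Fin n) : Prop :=
  StrictMono g ∧ ∀ i j : Fin k, σ i < σ j ↔ π (g i) < π (g j)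

/-- The entries of `π` at positions in `S` contain `σ ⊕ ⋯ ⊕ σ` with `k` summands. -/
def HasDirectSum {m n : ℕ} (σ : Equiv.Perm (Fin m)) (π : Equiv.Perm (Fin n)) (S : Set (Fin n))
    (k : ℕ) : Prop :=
  ∃ f : Fin k → Fin m → Fin n, (∀ j, IsOccurrence σ π (f j)) ∧ (∀ j i, f j i ∈ S) ∧
    ∀ j j', j < j' → ∀ i i', f j i < f j' i' ∧ π (f j i) < π (f j' i')

section DirectSum

variable {m n k : ℕ} {σ : Equiv.Perm (Fin m)} {π : Equiv.Perm (Fin n)} {S T U : Set (Fin n)}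

lemma permContains_oplusIter_iff :
    PermContains (oplusIter σ k) π ↔ HasDirectSum σ π Set.univ k := by
  constructor
  · rintro ⟨g, hg, hgπ⟩
    refine ⟨fun j i => g (blockEquiv k m (j, i)), fun j => ⟨fun i i' h => ?_, fun i i' => ?_⟩,
      fun _ _ => Set.mem_univ _, fun j j' h i i' => ⟨?_, ?_⟩⟩
    · exact hg (blockEquiv_lt_iff.2 (Or.inr ⟨rfl, h⟩))
    · simp [← hgπ, oplusIter_blockEquiv, blockEquiv_lt_iff]
    · exact hg (blockEquiv_lt_iff.2 (Or.inl h))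
    · rw [← hgπ, oplusIter_blockEquiv, oplusIter_blockEquiv]
      exact blockEquiv_lt_iff.2 (Or.inl h)
  · rintro ⟨f, hocc, -, hf⟩
    refine ⟨fun x => f ((blockEquiv k m).symm x).1 ((blockEquiv k m).symm x).2, ?_, ?_⟩
    · intro x y hxy
      obtain ⟨⟨j, i⟩, rfl⟩ := (blockEquiv k m).surjective x
      obtain ⟨⟨j', i'⟩, rfl⟩ := (blockEquiv k m).surjective y
      simp only [Equiv.symm_apply_apply]
      rcases blockEquiv_lt_iff.1 hxy with h | ⟨rfl, h⟩
      · exact (hf j j' h i i').1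
      · exact (hocc j).1 h
    · intro x y
      obtain ⟨⟨j, i⟩, rfl⟩ := (blockEquiv k m).surjective x
      obtain ⟨⟨j', i'⟩, rfl⟩ := (blockEquiv k m).surjective y
      simp only [Equiv.symm_apply_apply, oplusIter_blockEquiv, blockEquiv_lt_iff]
      rcases lt_trichotomy j j' with h | rfl | h
      · simp [h, (hf j j' h i i').2]
      · simp [(hocc j).2]
      · simp [h.not_gt, h.ne', (hf j' j h i' i).2.not_gt]

lemma hasDirectSum_zero : HasDirectSum σ π S 0 :=
  ⟨fun j => j.elim0, fun j => j.elim0, fun j => j.elim0, fun j => j.elim0⟩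

lemma HasDirectSum.mono (h : HasDirectSum σ π T k) (hTS : T ⊆ S) : HasDirectSum σ π S k := by
  obtain ⟨f, hocc, hfT, hf⟩ := h
  exact ⟨f, hocc, fun j i => hTS (hfT j i), hf⟩

lemma HasDirectSum.cons {g : Fin m → Fin n} (h : HasDirectSum σ π T k) (hTS : T ⊆ S)
    (hg : IsOccurrence σ π g) (hgS : ∀ i, g i ∈ S)
    (hgT : ∀ i, ∀ x ∈ T, g i < x ∧ π (g i) < π x) : HasDirectSum σ π S (k + 1) := by
  obtain ⟨f, hocc, hfT, hf⟩ := h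
  refine ⟨Fin.cons g f, Fin.cases hg hocc, Fin.cases hgS fun j i => hTS (hfT j i), ?_⟩
  intro j j' hjj' i i'
  cases j' using Fin.cases with
  | zero => exact absurd hjj' (Fin.not_lt_zero j)
  | succ j' =>
    cases j using Fin.cases with
    | zero => exact hgT i _ (hfT j' i')
    | succ j => exact hf j j' (Fin.succ_lt_succ_iff.1 hjj') i i'

lemma isOccurrence_p21 {p q : Fin n} (hpq : p < q) (hπ : π q < π p) :
    IsOccurrence p21 π ![p, q] := by
  constructor
  · simpa [Fin.strictMono_iff_lt_succ] using hpq
  · simp [Fin.forall_fin_two, p21, hπ, hπ.le]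

lemma exists_lt_of_not_strictMonoOn (h : ¬ StrictMonoOn π S) :
    ∃ p ∈ S, ∃ q ∈ S, p < q ∧ π q < π p := by
  simp only [StrictMonoOn] at h
  push Not at h
  obtain ⟨p, hp, q, hq, hpq, hle⟩ := h
  exact ⟨p, hp, q, hq, hpq, hle.lt_of_ne fun e => hpq.ne' (π.injective e)⟩

lemma HasDirectSum.p21_succ (h : HasDirectSum p21 π U k) (hT : ¬ StrictMonoOn π T) (hTS : T ⊆ S)
    (hUS : U ⊆ S) (hTU : ∀ x ∈ T, ∀ y ∈ U, x < y ∧ π x < π y) :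
    HasDirectSum p21 π S (k + 1) := by
  obtain ⟨p, hp, q, hq, hpq, hπ⟩ := exists_lt_of_not_strictMonoOn hT
  exact h.cons hUS (isOccurrence_p21 hpq hπ) (Fin.forall_fin_two.2 ⟨hTS hp, hTS hq⟩)
    (Fin.forall_fin_two.2 ⟨hTU p hp, hTU q hq⟩)

end DirectSum

/-! ### Complements -/

/-- The complement of a permutation: its graph reflected in a horizontal line. It exchanges
direct sums of `21` and skew sums of `12`. -/
def complement {n : ℕ} (π : Equiv.Perm (Fin n)) : Equiv.Perm (Fin n) :=
  π.trans Fin.revPerm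

section Complement

variable {m n k : ℕ}

@[simp]
lemma complement_apply (π : Equiv.Perm (Fin n)) (i : Fin n) : complement π i = (π i).rev :=
  rfl

lemma complement_complement (π : Equiv.Perm (Fin n)) : complement (complement π) = π := by
  ext
  simp

lemma complement_dsum (π : Equiv.Perm (Fin m)) (σ : Equiv.Perm (Fin n)) :
    complement (dsum π σ) = sksum (complement π) (complement σ) := by
  ext i
  cases i using Fin.addCases with
  | left i =>
    simp only [dsum, sksum, complement_apply, Equiv.trans_apply, Equiv.sumCongr_apply,
      Equiv.sumComm_apply, finSumFinEquiv_symm_apply_castAdd, Sum.map_inl, Sum.swap_inl,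
      finSumFinEquiv_apply_left, finSumFinEquiv_apply_right, finCongr_apply, Fin.val_rev,
      Fin.val_castAdd, Fin.cast_natAdd, Fin.val_addNat]
    omega
  | right i =>
    simp only [dsum, sksum, complement_apply, Equiv.trans_apply, Equiv.sumCongr_apply,
      Equiv.sumComm_apply, finSumFinEquiv_symm_apply_natAdd, Sum.map_inr, Sum.swap_inr,
      finSumFinEquiv_apply_left, finSumFinEquiv_apply_right, finCongr_apply, Fin.val_rev,
      Fin.val_natAdd, Fin.val_cast, Fin.val_castAdd]
    omega

lemma complement_permCongr_finCongr (h : m = n) (π : Equiv.Perm (Fin m)) :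
    complement ((finCongr h).permCongr π) = (finCongr h).permCongr (complement π) := by
  subst h
  rfl

lemma complement_oplusIter (σ : Equiv.Perm (Fin m)) (k : ℕ) :
    complement (oplusIter σ k) = ominusIter (complement σ) k := by
  induction k with
  | zero => ext i; exact i.elim0
  | succ k ih =>
    rw [oplusIter, complement_permCongr_finCongr, complement_dsum, ih, ominusIter]

lemma complement_p21 : complement p21 = p12 := by
  decide

lemma complement_oplusIter_p21 (k : ℕ) : complement (oplusIter p21 k) = ominusIter p12 k := by
  rw [complement_oplusIter, complement_p21]

lemma PermContains.complement {σ : Equiv.Perm (Fin m)} {π : Equiv.Perm (Fin n)}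
    (h : PermContains σ π) : PermContains (complement σ) (complement π) := by
  obtain ⟨f, hf, hσ⟩ := h
  exact ⟨f, hf, fun i j => by simp [hσ]⟩

lemma strictMonoOn_complement_iff {π : Equiv.Perm (Fin n)} {S : Set (Fin n)} :
    StrictMonoOn (complement π) S ↔ StrictAntiOn π S := by
  simp [StrictMonoOn, StrictAntiOn]

lemma strictAntiOn_complement_iff {π : Equiv.Perm (Fin n)} {S : Set (Fin n)} :
    StrictAntiOn (complement π) S ↔ StrictMonoOn π S := by
  simp [StrictMonoOn, StrictAntiOn]

lemma permContains_ominusIter_p12_iff {π : Equiv.Perm (Fin n)} :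
    PermContains (ominusIter p12 k) π ↔ HasDirectSum p21 (complement π) Set.univ k := by
  rw [← permContains_oplusIter_iff, ← complement_oplusIter_p21]
  refine ⟨fun h => ?_, fun h => ?_⟩
  · simpa only [complement_complement] using h.complement
  · simpa only [complement_complement] using h.complement

end Complement

/-! ### Griddings as colourings -/

/-- The positions of `π` in column `k` and row `l`, when `col` and `row` assign columns to
positions and rows to values. -/
def cell {n : ℕ} {K L : Type*} (π : Equiv.Perm (Fin n)) (col : Fin n → K) (row : Fin n → L)
    (k : K) (l : L) : Set (Fin n) :=
  {i | col i = k ∧ row (π i) = l}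

section Gridding

variable {n t u : ℕ}

lemma lt_card_filter_iff_of_antitone {P : Fin n → Prop} [DecidablePred P] (hP : Antitone P)
    (x : Fin n) : (x : ℕ) < (Finset.univ.filter P).card ↔ P x := by
  constructor
  · contrapose!
    intro hx
    rw [← Fin.card_Iio x]
    refine Finset.card_le_card fun y hy => Finset.mem_Iio.2 ?_
    by_contra! hxy
    exact hx (hP hxy (Finset.mem_filter.1 hy).2)
  · intro hx
    rw [← Nat.succ_le_iff, Nat.succ_eq_add_one, ← Fin.card_Iic x]
    refine Finset.card_le_card fun y hy => Finset.mem_filter.2 ⟨Finset.mem_univ y, ?_⟩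
    exact hP (Finset.mem_Iic.1 hy) hx

lemma exists_colouring_of_cuts {c : Fin (t + 1) → ℕ} (hc : Monotone c) (h0 : c 0 = 0)
    (hlast : c (Fin.last t) = n) : ∃ col : Fin n → Fin t, Monotone col ∧
      ∀ x k, col x = k ↔ c k.castSucc ≤ x ∧ (x : ℕ) < c k.succ := by
  have exists_colour (x : Fin n) : ∃ k : Fin t, c k.castSucc ≤ x ∧ (x : ℕ) < c k.succ := by
    by_contra! h
    have hle (k : Fin (t + 1)) : c k ≤ x := by
      induction k using Fin.induction with
      | zero => omega
      | succ k ih => exact h k ih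
    exact absurd (hle (Fin.last t)) (by omega)
  have colour_le {x y : Fin n} {k l : Fin t} (hk : c k.castSucc ≤ x) (hl : (y : ℕ) < c l.succ)
      (hxy : x ≤ y) : k ≤ l := by
    by_contra! hlk
    have : c l.succ ≤ c k.castSucc := hc (Fin.le_castSucc_iff.2 (Fin.succ_lt_succ_iff.2 hlk))
    have : (x : ℕ) ≤ y := hxy
    omega
  choose col hcol using exists_colour
  refine ⟨col, fun x y hxy => colour_le (hcol x).1 (hcol y).2 hxy, fun x k => ⟨?_, fun h => ?_⟩⟩
  · rintro rfl
    exact hcol x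
  · exact le_antisymm (colour_le (hcol x).1 h.2 le_rfl) (colour_le h.1 (hcol x).2 le_rfl)

lemma exists_cuts_of_colouring {col : Fin n → Fin t} (hcol : Monotone col) :
    ∃ c : Fin (t + 1) → ℕ, Monotone c ∧ c 0 = 0 ∧ c (Fin.last t) = n ∧
      ∀ x k, col x = k ↔ c k.castSucc ≤ x ∧ (x : ℕ) < c k.succ := by
  refine ⟨fun k => (Finset.univ.filter fun x => (col x).castSucc < k).card, ?_, ?_, ?_, ?_⟩
  · exact fun k l hkl => Finset.card_le_card
      (Finset.monotone_filter_right _ fun x _ hx => hx.trans_le hkl)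
  · simp
  · simp [Fin.castSucc_lt_last]
  · intro x k
    have lt_cut_iff (k : Fin (t + 1)) := lt_card_filter_iff_of_antitone
      (P := fun x => (col x).castSucc < k)
      (fun y z hyz hz => (Fin.castSucc_le_castSucc_iff.2 (hcol hyz)).trans_lt hz) x
    rw [lt_cut_iff, ← not_lt, lt_cut_iff, Fin.castSucc_lt_castSucc_iff, not_lt,
      Fin.castSucc_lt_succ_iff, eq_comm, le_antisymm_iff]

lemma inGrid_iff_exists_colouring {M : Fin t → Fin u → SignType} {π : Equiv.Perm (Fin n)} :
    InGrid M π ↔ ∃ (col : Fin n → Fin t) (row : Fin n → Fin u), Monotone col ∧ Monotone row ∧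
      ∀ k l, (M k l = 1 → StrictMonoOn π (cell π col row k l)) ∧
        (M k l = -1 → StrictAntiOn π (cell π col row k l)) ∧
        (M k l = 0 → cell π col row k l = ∅) := by
  have block_iff_cell {c : Fin (t + 1) → ℕ} {r : Fin (u + 1) → ℕ} {col : Fin n → Fin t}
      {row : Fin n → Fin u} (hcol : ∀ x k, col x = k ↔ c k.castSucc ≤ x ∧ (x : ℕ) < c k.succ)
      (hrow : ∀ y l, row y = l ↔ r l.castSucc ≤ y ∧ (y : ℕ) < r l.succ) (k l i) :
      InBlock π c r k l i ↔ i ∈ cell π col row k l := by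
    simp only [cell, Set.mem_ofPred_eq, hcol, hrow, InBlock, and_assoc]
  constructor
  · rintro ⟨c, r, hc, hr, hc0, hclast, hr0, hrlast, h⟩
    obtain ⟨col, hcol, hcol_iff⟩ := exists_colouring_of_cuts hc hc0 hclast
    obtain ⟨row, hrow, hrow_iff⟩ := exists_colouring_of_cuts hr hr0 hrlast
    refine ⟨col, row, hcol, hrow, fun k l => ?_⟩
    simp only [block_iff_cell hcol_iff hrow_iff] at h
    exact ⟨fun hM i hi j hj => (h k l).1 hM i j hi hj, fun hM i hi j hj => (h k l).2.1 hM i j hi hj,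
      fun hM => Set.eq_empty_iff_forall_notMem.2 ((h k l).2.2 hM)⟩
  · rintro ⟨col, row, hcol, hrow, h⟩
    obtain ⟨c, hc, hc0, hclast, hcol_iff⟩ := exists_cuts_of_colouring hcol
    obtain ⟨r, hr, hr0, hrlast, hrow_iff⟩ := exists_cuts_of_colouring hrow
    refine ⟨c, r, hc, hr, hc0, hclast, hr0, hrlast, fun k l => ?_⟩
    simp only [block_iff_cell hcol_iff hrow_iff]
    exact ⟨fun hM i j hi hj => (h k l).1 hM hi hj, fun hM i j hi hj => (h k l).2.1 hM hi hj,
      fun hM => Set.eq_empty_iff_forall_notMem.1 ((h k l).2.2 hM)⟩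

lemma InGrid.complement {M : Fin t → Fin u → SignType} {π : Equiv.Perm (Fin n)}
    (h : InGrid M π) : InGrid (fun k l => -M k l.rev) (complement π) := by
  obtain ⟨col, row, hcol, hrow, hM⟩ := inGrid_iff_exists_colouring.1 h
  have cell_complement (k : Fin t) (l : Fin u) :
      cell (_root_.complement π) col (fun y => (row y.rev).rev) k l = cell π col row k l.rev := by
    ext i
    simp [cell, Fin.rev_eq_iff]
  refine inGrid_iff_exists_colouring.2 ⟨col, fun y => (row y.rev).rev, hcol,
    fun x y hxy => Fin.rev_le_rev.2 (hrow (Fin.rev_le_rev.2 hxy)), fun k l => ?_⟩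
  rw [cell_complement]
  obtain ⟨hmono, hanti, hempty⟩ := hM k l.rev
  exact ⟨fun h => strictMonoOn_complement_iff.2 (hanti (neg_eq_iff_eq_neg.1 h)),
    fun h => strictAntiOn_complement_iff.2 (hmono (neg_inj.1 h)),
    fun h => hempty (by simpa using h)⟩

/-! ### Long sums are not in a grid class -/

lemma InGrid.le_of_hasDirectSum_p21 {M : Fin t → Fin u → SignType} {π : Equiv.Perm (Fin n)}
    (h : InGrid M π) {k : ℕ} (hk : HasDirectSum p21 π Set.univ k) : k ≤ t * u ^ 2 := by
  obtain ⟨col, row, hcol, hrow, hM⟩ := inGrid_iff_exists_colouring.1 h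
  obtain ⟨f, hocc, -, hf⟩ := hk
  by_contra! hlt
  obtain ⟨j, j', hne, hcells⟩ := Fintype.exists_ne_map_eq_of_card_lt
    (fun j : Fin k => (col (f j 0), fun i : Fin 2 => row (π (f j i)))) (by simpa using hlt)
  wlog hjj' : j < j' generalizing j j'
  · exact this j' j hne.symm hcells.symm (hne.lt_or_gt.resolve_left hjj')
  simp only [funext_iff, Prod.ext_iff, Fin.forall_fin_two] at hcells
  obtain ⟨hcol0, hrow0, hrow1⟩ := hcells
  have pos_lt : f j 0 < f j 1 := (hocc j).1 (by decide)
  have val_lt : π (f j 1) < π (f j 0) := ((hocc j).2 1 0).1 (by decide)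
  have hcol01 : col (f j 1) = col (f j 0) :=
    le_antisymm ((hcol (hf j j' hjj' 1 0).1.le).trans_eq hcol0.symm) (hcol pos_lt.le)
  have hrow01 : row (π (f j 1)) = row (π (f j 0)) :=
    le_antisymm (hrow val_lt.le) ((hrow (hf j j' hjj' 0 1).2.le).trans_eq hrow1.symm)
  have mem0 : f j 0 ∈ cell π col row (col (f j 0)) (row (π (f j 0))) := ⟨rfl, rfl⟩
  have mem1 : f j 1 ∈ cell π col row (col (f j 0)) (row (π (f j 0))) := ⟨hcol01, hrow01⟩
  have mem0' : f j' 0 ∈ cell π col row (col (f j 0)) (row (π (f j 0))) :=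
    ⟨hcol0.symm, hrow0.symm⟩
  obtain ⟨hmono, hanti, hempty⟩ := hM (col (f j 0)) (row (π (f j 0)))
  obtain ⟨pos_lt', val_lt'⟩ := hf j j' hjj' 0 0
  rcases SignType.trichotomy (M (col (f j 0)) (row (π (f j 0)))) with hsign | hsign | hsign
  · exact val_lt'.not_gt (hanti hsign mem0 mem0' pos_lt')
  · exact (hempty hsign).subset mem0
  · exact val_lt.not_gt (hmono hsign mem0 mem1 pos_lt)

lemma not_inGrid_oplusIter_p21 (M : Fin t → Fin u → SignType) {k : ℕ} (hk : t * u ^ 2 < k) :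
    ¬ InGrid M (oplusIter p21 k) := fun h =>
  hk.not_ge (h.le_of_hasDirectSum_p21
    (permContains_oplusIter_iff.1 ⟨id, strictMono_id, fun _ _ => Iff.rfl⟩))

lemma not_inGrid_ominusIter_p12 (M : Fin t → Fin u → SignType) {k : ℕ} (hk : t * u ^ 2 < k) :
    ¬ InGrid M (ominusIter p12 k) := by
  intro h
  refine not_inGrid_oplusIter_p21 (fun k l => -M k l.rev) hk ?_
  rw [← complement_complement (oplusIter p21 k), complement_oplusIter_p21]
  exact h.complement

/-! ### One matrix for all patterns of signs -/

lemma InGrid.of_strictMono_columns {t' : ℕ} {M : Fin t → Fin u → SignType}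
    {M' : Fin t' → Fin u → SignType} {e : Fin t → Fin t'} (he : StrictMono e)
    (hM : ∀ k l, M' (e k) l = M k l) {π : Equiv.Perm (Fin n)} (h : InGrid M π) : InGrid M' π := by
  obtain ⟨col, row, hcol, hrow, hcell⟩ := inGrid_iff_exists_colouring.1 h
  refine inGrid_iff_exists_colouring.2 ⟨e ∘ col, row, he.monotone.comp hcol, hrow, fun k l => ?_⟩
  by_cases hk : k ∈ Set.range e
  · obtain ⟨k, rfl⟩ := hk
    have : cell π (e ∘ col) row (e k) l = cell π col row k l := by
      simp [cell, he.injective.eq_iff]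
    simpa only [this, hM] using hcell k l
  · have : cell π (e ∘ col) row k l = ∅ :=
      Set.eq_empty_iff_forall_notMem.2 fun i hi => hk ⟨col i, hi.1⟩
    simp [this, StrictMonoOn, StrictAntiOn]

lemma exists_universal_matrix (t u : ℕ) :
    ∃ (t' : ℕ) (M' : Fin t' → Fin u → SignType), ∀ (n : ℕ) (π : Equiv.Perm (Fin n))
      (M : Fin t → Fin u → SignType), InGrid M π → InGrid M' π := by
  let E := Fintype.equivFin (Fin u → SignType)
  refine ⟨_, fun k => E.symm (finProdFinEquiv.symm k).2, fun n π M h =>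
    h.of_strictMono_columns (e := fun k => finProdFinEquiv (k, E (M k))) ?_ ?_⟩
  · exact fun k l hkl => finProdFinEquiv_lt_iff.2 (Or.inl hkl)
  · simp

lemma exists_inGrid_of_colouring {π : Equiv.Perm (Fin n)} {col : Fin n → Fin t}
    {row : Fin n → Fin u} (hcol : Monotone col) (hrow : Monotone row)
    (h : ∀ k l, StrictMonoOn π (cell π col row k l) ∨ StrictAntiOn π (cell π col row k l)) :
    ∃ M : Fin t → Fin u → SignType, InGrid M π := by
  classical
  refine ⟨fun k l => if StrictMonoOn π (cell π col row k l) then 1 else -1,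
    inGrid_iff_exists_colouring.2 ⟨col, row, hcol, hrow, fun k l => ?_⟩⟩
  by_cases hmono : StrictMonoOn π (cell π col row k l)
  · simp [hmono]
  · simp [hmono, (h k l).resolve_left hmono]

end Gridding

/-! ### Cutting into monotone pieces -/

/-- No line of `A` and `B` separates two entries of `π` at positions in `T`. The line `a ∈ A` runs
between the positions `a - 1` and `a`, the line `b ∈ B` between the values `b - 1` and `b`. -/
def IsUncut {n : ℕ} (π : Equiv.Perm (Fin n)) (A B : Finset ℕ) (T : Set (Fin n)) : Prop :=
  (∀ a ∈ A, ∀ i ∈ T, ∀ j ∈ T, a ≤ (i : ℕ) → a ≤ (j : ℕ)) ∧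
    ∀ b ∈ B, ∀ i ∈ T, ∀ j ∈ T, b ≤ (π i : ℕ) → b ≤ (π j : ℕ)

/-- The vertical lines `A` and the horizontal lines `B` cut the entries of `π` at positions in `S`
into monotone pieces. Lines are encoded as in `IsUncut`. -/
def CutsIntoMonotone {n : ℕ} (π : Equiv.Perm (Fin n)) (A B : Finset ℕ) (S : Set (Fin n)) : Prop :=
  ∀ T ⊆ S, IsUncut π A B T → StrictMonoOn π T ∨ StrictAntiOn π T

/-- The positions in `S` of the entries of `π` to the left of `v` and below `h`. As for the other
three quadrants, `v` and `h` are the lines preceding position `v` and value `h`. -/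
def southWest {n : ℕ} (π : Equiv.Perm (Fin n)) (S : Set (Fin n)) (v h : ℕ) : Set (Fin n) :=
  {i ∈ S | (i : ℕ) < v ∧ (π i : ℕ) < h}

/-- The positions in `S` of the entries of `π` to the left of `v` and above `h`. -/
def northWest {n : ℕ} (π : Equiv.Perm (Fin n)) (S : Set (Fin n)) (v h : ℕ) : Set (Fin n) :=
  {i ∈ S | (i : ℕ) < v ∧ h ≤ (π i : ℕ)}

/-- The positions in `S` of the entries of `π` to the right of `v` and below `h`. -/
def southEast {n : ℕ} (π : Equiv.Perm (Fin n)) (S : Set (Fin n)) (v h : ℕ) : Set (Fin n) :=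
  {i ∈ S | v ≤ (i : ℕ) ∧ (π i : ℕ) < h}

/-- The positions in `S` of the entries of `π` to the right of `v` and above `h`. -/
def northEast {n : ℕ} (π : Equiv.Perm (Fin n)) (S : Set (Fin n)) (v h : ℕ) : Set (Fin n) :=
  {i ∈ S | v ≤ (i : ℕ) ∧ h ≤ (π i : ℕ)}

/-- The vertical line `v` is as far to the right as possible subject to the quadrant of `S` to its
left and above `h` being decreasing. -/
def IsBalanced {n : ℕ} (π : Equiv.Perm (Fin n)) (S : Set (Fin n)) (v h : ℕ) : Prop :=
  StrictAntiOn π (northWest π S v h) ∧ (n ≤ v ∨ ¬ StrictAntiOn π (northWest π S (v + 1) h))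

section Cutting

variable {n : ℕ} {π : Equiv.Perm (Fin n)} {S : Set (Fin n)}

lemma IsUncut.mono {A A' B B' : Finset ℕ} {T : Set (Fin n)} (h : IsUncut π A' B' T)
    (hA : A ⊆ A') (hB : B ⊆ B') : IsUncut π A B T :=
  ⟨fun a ha => h.1 a (hA ha), fun b hb => h.2 b (hB hb)⟩

lemma IsUncut.left_or_right {A B : Finset ℕ} {T : Set (Fin n)} (h : IsUncut π A B T) {a : ℕ}
    (ha : a ∈ A) : (∀ i ∈ T, (i : ℕ) < a) ∨ ∀ i ∈ T, a ≤ (i : ℕ) := by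
  by_contra! hno
  obtain ⟨⟨i, hi, hai⟩, j, hj, hja⟩ := hno
  exact hja.not_ge (h.1 a ha i hi j hj hai)

lemma IsUncut.below_or_above {A B : Finset ℕ} {T : Set (Fin n)} (h : IsUncut π A B T) {b : ℕ}
    (hb : b ∈ B) : (∀ i ∈ T, (π i : ℕ) < b) ∨ ∀ i ∈ T, b ≤ (π i : ℕ) := by
  by_contra! hno
  obtain ⟨⟨i, hi, hbi⟩, j, hj, hjb⟩ := hno
  exact hjb.not_ge (h.2 b hb i hi j hj hbi)

lemma exists_isBalanced (π : Equiv.Perm (Fin n)) (S : Set (Fin n)) (h : ℕ) :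
    ∃ v, IsBalanced π S v h := by
  by_cases hall : ∃ v, ¬ StrictAntiOn π (northWest π S v h)
  · obtain ⟨v, hv, hv'⟩ := Nat.exists_not_and_succ_of_not_zero_of_exists
      (by simp [northWest, StrictAntiOn]) hall
    exact ⟨v, not_not.1 hv, Or.inr hv'⟩
  · push Not at hall
    exact ⟨n, hall n, Or.inl le_rfl⟩

/-- Sliding `h` upwards, with `v` balanced for `h`, take the last `h` for which the south-west
quadrant is increasing. -/
lemma exists_pivot (hS : ¬ StrictMonoOn π S) :
    ∃ h v v', IsBalanced π S v h ∧ StrictMonoOn π (southWest π S v h) ∧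
      IsBalanced π S v' (h + 1) ∧ ¬ StrictMonoOn π (southWest π S v' (h + 1)) := by
  let Q (h : ℕ) : Prop := ∃ v, IsBalanced π S v h ∧ StrictMonoOn π (southWest π S v h)
  have Q_zero : Q 0 := by
    obtain ⟨v, hv⟩ := exists_isBalanced π S 0
    exact ⟨v, hv, by simp [southWest, StrictMonoOn]⟩
  have not_Q_top : ¬ Q n := by
    rintro ⟨v, ⟨-, hv⟩, hmono⟩
    have hnv : n ≤ v := hv.resolve_right (by simp [northWest, StrictAntiOn])
    have southWest_eq : southWest π S v n = S :=
      Set.sep_eq_self_iff_mem_true.2 fun i _ => ⟨i.2.trans_le hnv, (π i).2⟩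
    exact hS (southWest_eq ▸ hmono)
  obtain ⟨h, hQ, hQ'⟩ := Nat.exists_not_and_succ_of_not_zero_of_exists
    (p := fun h => ¬ Q h) (not_not.2 Q_zero) ⟨n, not_Q_top⟩
  obtain ⟨v, hv, hmono⟩ := not_not.1 hQ
  obtain ⟨v', hv'⟩ := exists_isBalanced π S (h + 1)
  exact ⟨h, v, v', hv, hmono, hv', fun hmono' => hQ' ⟨v', hv', hmono'⟩⟩

lemma not_hasDirectSum_p21_northEast {v h k : ℕ} (hS : ¬ HasDirectSum p21 π S (k + 1))
    (hSW : ¬ StrictMonoOn π (southWest π S v h)) :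
    ¬ HasDirectSum p21 π (northEast π S v h) k := fun hk =>
  hS (hk.p21_succ hSW (Set.sep_subset _ _) (Set.sep_subset _ _)
    fun _ hi _ hj => ⟨hi.2.1.trans_le hj.2.1, hi.2.2.trans_le hj.2.2⟩)

lemma not_hasDirectSum_p21_complement_southEast {v h k : ℕ}
    (hS : ¬ HasDirectSum p21 (complement π) S (k + 1))
    (hNW : ¬ StrictAntiOn π (northWest π S v h)) :
    ¬ HasDirectSum p21 (complement π) (southEast π S v h) k := fun hk =>
  hS (hk.p21_succ (mt strictMonoOn_complement_iff.1 hNW) (Set.sep_subset _ _) (Set.sep_subset _ _)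
    fun _ hi _ hj => ⟨hi.2.1.trans_le hj.2.1, Fin.rev_lt_rev.2 (hj.2.2.trans_le hi.2.2)⟩)

lemma cutsIntoMonotone_of_quadrants {v v' h : ℕ} {A₁ A₂ B₁ B₂ : Finset ℕ}
    (hSW : StrictMonoOn π (southWest π S v h)) (hNW : StrictAntiOn π (northWest π S v' (h + 1)))
    (hSE : CutsIntoMonotone π A₁ B₁ (southEast π S (v + 1) h))
    (hNE : CutsIntoMonotone π A₂ B₂ (northEast π S v' (h + 1))) :
    CutsIntoMonotone π ({v, v + 1, v'} ∪ (A₁ ∪ A₂)) ({h, h + 1} ∪ (B₁ ∪ B₂)) S := by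
  intro T hTS hT
  have mono_of_subsingleton (hsub : T.Subsingleton) : StrictMonoOn π T ∨ StrictAntiOn π T :=
    Or.inl fun i hi j hj hij => absurd (hsub hi hj) hij.ne
  rcases hT.below_or_above (b := h) (by simp) with below | above
  · rcases hT.left_or_right (a := v) (by simp) with left | right
    · exact Or.inl (hSW.mono fun i hi => ⟨hTS hi, left i hi, below i hi⟩)
    rcases hT.left_or_right (a := v + 1) (by simp) with left' | right'
    · exact mono_of_subsingleton fun i hi j hj => by grind
    · exact hSE T (fun i hi => ⟨hTS hi, right' i hi, below i hi⟩) (hT.mono (by grind) (by grind))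
  rcases hT.below_or_above (b := h + 1) (by simp) with below' | above'
  · exact mono_of_subsingleton fun i hi j hj => π.injective (by grind)
  rcases hT.left_or_right (a := v') (by simp) with left | right
  · exact Or.inr (hNW.mono fun i hi => ⟨hTS hi, left i hi, above' i hi⟩)
  · exact hNE T (fun i hi => ⟨hTS hi, right i hi, above' i hi⟩) (hT.mono (by grind) (by grind))

lemma exists_cutsIntoMonotone (a b : ℕ) :
    ∃ N : ℕ, ∀ (n : ℕ) (π : Equiv.Perm (Fin n)) (S : Set (Fin n)),
      ¬ HasDirectSum p21 (complement π) S a → ¬ HasDirectSum p21 π S b →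
      ∃ A B : Finset ℕ, A.card ≤ N ∧ B.card ≤ N ∧ CutsIntoMonotone π A B S := by
  induction a generalizing b with
  | zero => exact ⟨0, fun _ _ _ ha => absurd hasDirectSum_zero ha⟩
  | succ a iha =>
    induction b with
    | zero => exact ⟨0, fun _ _ _ _ hb => absurd hasDirectSum_zero hb⟩
    | succ b ihb =>
      obtain ⟨N₁, hN₁⟩ := iha (b + 1)
      obtain ⟨N₂, hN₂⟩ := ihb
      refine ⟨3 + (N₁ + N₂), fun n π S ha hb => ?_⟩
      by_cases hS : StrictMonoOn π S
      · exact ⟨∅, ∅, by simp, by simp, fun T hTS _ => Or.inl (hS.mono hTS)⟩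
      obtain ⟨h, v, v', ⟨-, hv⟩, hSW, ⟨hNW, -⟩, hSW'⟩ := exists_pivot hS
      have cut_southEast : ∃ A B : Finset ℕ, A.card ≤ N₁ ∧ B.card ≤ N₁ ∧
          CutsIntoMonotone π A B (southEast π S (v + 1) h) := by
        rcases hv with hnv | hNW'
        · exact ⟨∅, ∅, by simp, by simp, fun T hT _ => Or.inl fun i hi =>
            absurd (hT hi).2.1 (by omega)⟩
        · exact hN₁ n π _ (not_hasDirectSum_p21_complement_southEast ha hNW')
            fun h => hb (h.mono (Set.sep_subset _ _))
      obtain ⟨A₁, B₁, hA₁, hB₁, hSE⟩ := cut_southEast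
      obtain ⟨A₂, B₂, hA₂, hB₂, hNE⟩ := hN₂ n π _ (fun h => ha (h.mono (Set.sep_subset _ _)))
        (not_hasDirectSum_p21_northEast hb hSW')
      refine ⟨_, _, ?_, ?_, cutsIntoMonotone_of_quadrants hSW hNW hSE hNE⟩
      · exact (Finset.card_union_le _ _).trans (add_le_add Finset.card_le_three
          ((Finset.card_union_le _ _).trans (add_le_add hA₁ hA₂)))
      · exact (Finset.card_union_le _ _).trans (add_le_add (Finset.card_le_two.trans (by simp))
          ((Finset.card_union_le _ _).trans (add_le_add hB₁ hB₂)))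

lemma exists_monotone_separating {α : Type*} [LinearOrder α] {A : Finset α} {N : ℕ}
    (hA : A.card ≤ N) : ∃ colour : α → Fin (N + 1), Monotone colour ∧
      ∀ x y, colour x = colour y → ∀ a ∈ A, a ≤ x → a ≤ y := by
  refine ⟨fun x => ⟨(A.filter (· ≤ x)).card,
    Nat.lt_succ_of_le ((Finset.card_filter_le _ _).trans hA)⟩, fun x y hxy => ?_, ?_⟩
  · exact Finset.card_le_card (Finset.monotone_filter_right _ fun a _ ha => ha.trans hxy)
  · intro x y hcard a ha hax
    by_contra! hya
    refine (Finset.card_lt_card (Finset.ssubset_iff_of_subset ?_ |>.2 ⟨a, ?_, ?_⟩)).ne'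
      (congrArg Fin.val hcard)
    · exact Finset.monotone_filter_right _ fun b _ hb => hb.trans (hya.le.trans hax)
    · exact Finset.mem_filter.2 ⟨ha, hax⟩
    · simp [hya]

lemma CutsIntoMonotone.exists_inGrid {A B : Finset ℕ} {N : ℕ}
    (h : CutsIntoMonotone π A B Set.univ) (hA : A.card ≤ N) (hB : B.card ≤ N) :
    ∃ M : Fin (N + 1) → Fin (N + 1) → SignType, InGrid M π := by
  obtain ⟨col, hcol, hcolA⟩ := exists_monotone_separating hA
  obtain ⟨row, hrow, hrowB⟩ := exists_monotone_separating hB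
  refine exists_inGrid_of_colouring (col := fun x => col x) (row := fun y => row y)
    (fun _ _ hxy => hcol hxy) (fun _ _ hxy => hrow hxy) fun k l => h _ (Set.subset_univ _) ⟨?_, ?_⟩
  · exact fun a ha i hi j hj => hcolA _ _ (hi.1.trans hj.1.symm) a ha
  · exact fun b hb i hi j hj => hrowB _ _ (hi.2.trans hj.2.symm) b hb

end Cutting

lemma exists_matrix_of_not_permContains (a b : ℕ) :
    ∃ (t u : ℕ) (M : Fin t → Fin u → SignType), ∀ (n : ℕ) (π : Equiv.Perm (Fin n)),
      ¬ PermContains (ominusIter p12 a) π → ¬ PermContains (oplusIter p21 b) π → InGrid M π := by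
  obtain ⟨N, hN⟩ := exists_cutsIntoMonotone a b
  obtain ⟨t, M, hM⟩ := exists_universal_matrix (N + 1) (N + 1)
  refine ⟨t, N + 1, M, fun n π ha hb => ?_⟩
  rw [permContains_ominusIter_p12_iff] at ha
  rw [permContains_oplusIter_iff] at hb
  obtain ⟨A, B, hA, hB, hcuts⟩ := hN n π Set.univ ha hb
  obtain ⟨M', hM'⟩ := hcuts.exists_inGrid hA hB
  exact hM n π M' hM'

/-- **Theorem.** A permutation class is griddable if and only if it does not contain
arbitrarily long direct sums of `21` or skew sums of `12`; i.e. iff there exist `a, b`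
such that it contains neither the skew sum of `a + 1` copies of `12` nor the direct sum
of `b + 1` copies of `21`. -/
theorem griddable_iff_no_long_sums (C : ∀ n : ℕ, Set (Equiv.Perm (Fin n)))
    (hC : IsPermClass C) :
    (∃ (t u : ℕ) (M : Fin t → Fin u → SignType), ∀ n : ℕ, ∀ π ∈ C n, InGrid M π) ↔
      ∃ a b : ℕ, ominusIter p12 (a + 1) ∉ C (2 * (a + 1)) ∧
        oplusIter p21 (b + 1) ∉ C (2 * (b + 1)) := by
  constructor
  · rintro ⟨t, u, M, hM⟩
    exact ⟨t * u ^ 2, t * u ^ 2,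
      fun h => not_inGrid_ominusIter_p12 M (Nat.lt_succ_self _) (hM _ _ h),
      fun h => not_inGrid_oplusIter_p21 M (Nat.lt_succ_self _) (hM _ _ h)⟩
  · rintro ⟨a, b, ha, hb⟩
    obtain ⟨t, u, M, hM⟩ := exists_matrix_of_not_permContains (a + 1) (b + 1)
    exact ⟨t, u, M, fun n π hπ => hM n π (fun h => ha (hC _ _ _ _ hπ h))
      fun h => hb (hC _ _ _ _ hπ h)⟩
end

section
/- If M is a permutation matrix (a 0/1 matrix with exactly one 1 in each row and each column), then for every permutation class C contained in Grid(M) there is a polynomial p and an integer N such that the number of permutations of length n in C equals p(n) for all n ≥ N. -/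
/-!
Split a permutation into its maximal runs of consecutive positions carrying consecutive increasing
values. This writes it uniquely as an inflation of a permutation `τ` without such runs, and the
grid of a permutation matrix with `t` columns forces `τ` to have length at most `t`. So only
finitely many `τ` matter. For a fixed `τ`, the vectors of run lengths that occur in a class form a
lower set of `ℕᵏ`, because shortening runs produces patterns.

It remains to see that a lower set `D ⊆ ℕᵏ⁺¹` has eventually polynomially many vectors of weight
`n`. Split off the vectors with first coordinate `0`, to which induction on `k` applies; lowering
the first coordinate of the others by one gives a smaller lower set, and by Dickson's lemma this
can only be repeated until the lower set no longer changes. Then the counting function has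
eventually polynomial differences.
-/

open Filter
open scoped Finset Polynomial

section EventuallyPolynomial

/-- `f` agrees with a polynomial at all large arguments. -/
def EventuallyPolynomial (f : ℕ → ℚ) : Prop :=
  ∃ p : ℚ[X], ∀ᶠ n in atTop, f n = p.eval (n : ℚ)

namespace EventuallyPolynomial

variable {f g : ℕ → ℚ}

theorem congr (hf : EventuallyPolynomial f) (h : ∀ᶠ n in atTop, g n = f n) :
    EventuallyPolynomial g := by
  obtain ⟨p, hp⟩ := hf
  exact ⟨p, (h.and hp).mono fun n hn ↦ hn.1.trans hn.2⟩

theorem zero : EventuallyPolynomial fun _ ↦ 0 :=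
  ⟨0, by simp⟩

theorem add (hf : EventuallyPolynomial f) (hg : EventuallyPolynomial g) :
    EventuallyPolynomial fun n ↦ f n + g n := by
  obtain ⟨p, hp⟩ := hf
  obtain ⟨q, hq⟩ := hg
  exact ⟨p + q, (hp.and hq).mono fun n hn ↦ by simp [hn.1, hn.2]⟩

theorem sum {ι : Type*} (s : Finset ι) {f : ι → ℕ → ℚ}
    (hf : ∀ i ∈ s, EventuallyPolynomial (f i)) :
    EventuallyPolynomial fun n ↦ ∑ i ∈ s, f i n := by
  classical
  induction s using Finset.induction_on with
  | empty => simpa using zero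
  | insert a s ha ih =>
    simp only [Finset.sum_insert ha]
    exact (hf a (by simp)).add (ih fun i hi ↦ hf i (by simp [hi]))

theorem comp_add_iff (m : ℕ) :
    EventuallyPolynomial (fun n ↦ f (n + m)) ↔ EventuallyPolynomial f := by
  constructor
  · rintro ⟨p, hp⟩
    refine ⟨p.comp (Polynomial.X - Polynomial.C (m : ℚ)), ?_⟩
    rw [← map_add_atTop_eq_nat m, eventually_map]
    exact hp.mono fun n hn ↦ by simp [hn]
  · rintro ⟨p, hp⟩
    refine ⟨p.comp (Polynomial.X + Polynomial.C (m : ℚ)), ?_⟩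
    exact ((tendsto_add_atTop_nat m).eventually hp).mono fun n hn ↦ by simp [hn]

end EventuallyPolynomial

theorem exists_eval_add_one_eq_eval_add (p : ℚ[X]) :
    ∃ q : ℚ[X], ∀ x : ℚ, q.eval (x + 1) = q.eval x + p.eval x := by
  induction p using Polynomial.induction_on' with
  | add p₁ p₂ h₁ h₂ =>
    obtain ⟨q₁, h₁⟩ := h₁
    obtain ⟨q₂, h₂⟩ := h₂
    exact ⟨q₁ + q₂, fun x ↦ by simp only [Polynomial.eval_add, h₁, h₂]; ring⟩
  | monomial k a =>
    refine ⟨Polynomial.C (a / (k + 1)) * Polynomial.bernoulli (k + 1), fun x ↦ ?_⟩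
    have hk : (k : ℚ) + 1 ≠ 0 := by positivity
    simp only [Polynomial.eval_mul, Polynomial.eval_C, add_comm x 1,
      Polynomial.bernoulli_eval_one_add, Polynomial.eval_monomial, Nat.add_sub_cancel]
    push_cast
    field_simp

theorem EventuallyPolynomial.of_eventually_add_one_eq {f g : ℕ → ℚ} (hg : EventuallyPolynomial g)
    (h : ∀ᶠ n in atTop, f (n + 1) = f n + g n) : EventuallyPolynomial f := by
  obtain ⟨p, hp⟩ := hg
  obtain ⟨q, hq⟩ := exists_eval_add_one_eq_eval_add p
  obtain ⟨N, hN⟩ := eventually_atTop.1 (h.and hp)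
  refine ⟨q + Polynomial.C (f N - q.eval (N : ℚ)), eventually_atTop.2 ⟨N, fun n hn ↦ ?_⟩⟩
  induction n, hn using Nat.le_induction with
  | base => simp
  | succ n hn ih =>
    obtain ⟨hf, hgp⟩ := hN n hn
    simp only [Polynomial.eval_add, Polynomial.eval_C] at ih ⊢
    rw [hf, hgp, ih, Nat.cast_add_one, hq]
    ring

end EventuallyPolynomial

section LowerSets

instance wellFoundedLT_lowerSet {α : Type*} [Preorder α] [WellQuasiOrderedLE α] :
    WellFoundedLT (LowerSet α) := by
  refine ⟨RelEmbedding.wellFounded_iff_isEmpty.2 ⟨fun s ↦ ?_⟩⟩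
  have hs : StrictAnti s := fun m n hmn ↦ s.map_rel_iff.2 hmn
  choose x hx hx' using fun n : ℕ ↦
    Set.exists_of_ssubset (LowerSet.coe_ssubset_coe.2 (hs n.lt_succ_self))
  obtain ⟨m, n, hmn, hle⟩ := wellQuasiOrdered_le x
  exact hx' m ((s (m + 1)).lower hle (hs.antitone (Nat.succ_le_of_lt hmn) (hx n)))

/-- The vectors of weight `n` in a set of vectors of natural numbers. -/
def weightLayer {k : ℕ} (D : Set (Fin k → ℕ)) (n : ℕ) : Set (Fin k → ℕ) :=
  {a ∈ D | ∑ i, a i = n}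

theorem finite_weightLayer {k : ℕ} (D : Set (Fin k → ℕ)) (n : ℕ) : (weightLayer D n).Finite :=
  (Finset.Nat.antidiagonalTuple k n).finite_toSet.subset fun _ ha ↦
    Finset.Nat.mem_antidiagonalTuple.2 ha.2

theorem weightLayer_succ {k : ℕ} (D : Set (Fin (k + 1) → ℕ)) (n : ℕ) :
    weightLayer D (n + 1) = Matrix.vecCons 0 '' weightLayer (Matrix.vecCons 0 ⁻¹' D) (n + 1) ∪
      (· + Pi.single 0 1) '' weightLayer ((· + Pi.single 0 1) ⁻¹' D) n := by
  apply Set.Subset.antisymm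
  · rintro a ⟨haD, hsum⟩
    rcases Nat.eq_zero_or_pos (a 0) with h0 | h0
    · have ha : Matrix.vecCons 0 (Fin.tail a) = a := by rw [← h0]; exact Fin.cons_self_tail a
      refine Or.inl ⟨Fin.tail a, ⟨by rwa [Set.mem_preimage, ha], ?_⟩, ha⟩
      rwa [Fin.sum_univ_succ, h0, zero_add] at hsum
    · have ha : a - Pi.single 0 1 + Pi.single 0 1 = a :=
        tsub_add_cancel_of_le (update_le_iff.2 ⟨h0, fun _ _ ↦ zero_le⟩)
      refine Or.inr ⟨a - Pi.single 0 1, ⟨by rwa [Set.mem_preimage, ha], ?_⟩, ha⟩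
      rw [← ha] at hsum
      simpa [Finset.sum_add_distrib] using hsum
  · rintro _ (⟨a, ⟨haD, hsum⟩, rfl⟩ | ⟨a, ⟨haD, hsum⟩, rfl⟩)
    · exact ⟨haD, by simpa [Fin.sum_univ_succ] using hsum⟩
    · exact ⟨haD, by simpa [Finset.sum_add_distrib] using hsum⟩

theorem ncard_weightLayer_succ {k : ℕ} (D : Set (Fin (k + 1) → ℕ)) (n : ℕ) :
    (weightLayer D (n + 1)).ncard = (weightLayer (Matrix.vecCons 0 ⁻¹' D) (n + 1)).ncard +
      (weightLayer ((· + Pi.single 0 1) ⁻¹' D) n).ncard := by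
  have hcons : Function.Injective (Matrix.vecCons 0 : (Fin k → ℕ) → Fin (k + 1) → ℕ) :=
    Fin.cons_right_injective (α := fun _ ↦ ℕ) 0
  rw [weightLayer_succ, Set.ncard_union_eq _ ((finite_weightLayer _ _).image _)
    ((finite_weightLayer _ _).image _), Set.ncard_image_of_injective _ hcons,
    Set.ncard_image_of_injective _ (add_left_injective _)]
  rw [Set.disjoint_left]
  rintro _ ⟨a, -, rfl⟩ ⟨b, -, hb⟩
  simpa using congrFun hb 0

theorem eventuallyPolynomial_ncard_weightLayer {k : ℕ} (D : LowerSet (Fin k → ℕ)) :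
    EventuallyPolynomial fun n ↦ ((weightLayer (D : Set (Fin k → ℕ)) n).ncard : ℚ) := by
  induction k with
  | zero =>
    refine EventuallyPolynomial.zero.congr ((eventually_gt_atTop 0).mono fun n hn ↦ ?_)
    have hempty : weightLayer (D : Set (Fin 0 → ℕ)) n = ∅ :=
      Set.eq_empty_of_forall_notMem fun a ha ↦ hn.ne (by simpa using ha.2)
    simp [hempty]
  | succ k ih =>
    induction D using WellFoundedLT.induction with
    | ind D ihD =>
      let face : LowerSet (Fin k → ℕ) :=
        ⟨Matrix.vecCons 0 ⁻¹' D, D.lower.preimage fun _ _ h ↦ Fin.cons_le_cons.2 ⟨le_rfl, h⟩⟩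
      let shift : LowerSet (Fin (k + 1) → ℕ) :=
        ⟨(· + Pi.single 0 1) ⁻¹' D, D.lower.preimage fun _ _ h ↦ add_le_add_left h _⟩
      have hface : EventuallyPolynomial fun n ↦
          ((weightLayer (face : Set (Fin k → ℕ)) (n + 1)).ncard : ℚ) :=
        (EventuallyPolynomial.comp_add_iff 1).2 (ih face)
      have hrec (n : ℕ) : ((weightLayer (D : Set (Fin (k + 1) → ℕ)) (n + 1)).ncard : ℚ) =
          (weightLayer (face : Set (Fin k → ℕ)) (n + 1)).ncard +
            (weightLayer (shift : Set (Fin (k + 1) → ℕ)) n).ncard :=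
        mod_cast ncard_weightLayer_succ (D : Set (Fin (k + 1) → ℕ)) n
      have hle : shift ≤ D := fun a ha ↦ D.lower (le_add_of_nonneg_right zero_le) ha
      rcases hle.eq_or_lt with heq | hlt
      · refine hface.of_eventually_add_one_eq (.of_forall fun n ↦ ?_)
        rw [hrec, heq, add_comm]
      · rw [← EventuallyPolynomial.comp_add_iff 1]
        exact (hface.add (ihD shift hlt)).congr (.of_forall hrec)

end LowerSets

section MonotoneMaps

theorem wcovBy_of_monotone_of_surjective {α β : Type*} [LinearOrder α] [Preorder β] {g : α → β}
    (hg : Monotone g) (hs : Function.Surjective g) {i j : α} (hij : i ⩿ j) : g i ⩿ g j := by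
  refine ⟨hg hij.le, fun c hic hcj ↦ ?_⟩
  obtain ⟨m, rfl⟩ := hs c
  exact hij.2 (hg.reflect_lt hic) (hg.reflect_lt hcj)

theorem monotone_update_id_of_covBy {α : Type*} [LinearOrder α] {c d : α} (h : c ⋖ d) :
    Monotone (Function.update id d c) := by
  intro i j hij
  rcases eq_or_ne d i with rfl | hi <;> rcases eq_or_ne d j with rfl | hj
  · exact le_rfl
  · rw [Function.update_self, Function.update_of_ne hj.symm]
    exact h.le.trans hij
  · rw [Function.update_self, Function.update_of_ne hi.symm]
    exact h.le_of_lt (hij.lt_of_ne hi.symm)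
  · rwa [Function.update_of_ne hi.symm, Function.update_of_ne hj.symm]

theorem val_eq_val_of_forall_covBy {n k k' : ℕ} {g : Fin n → Fin k} {g' : Fin n → Fin k'}
    (hg : Monotone g) (hs : Function.Surjective g) (hg' : Monotone g')
    (hs' : Function.Surjective g') (hker : ∀ i j, i ⋖ j → (g i = g j ↔ g' i = g' j)) (i : Fin n) :
    (g i : ℕ) = g' i := by
  obtain ⟨i, hi⟩ := i
  induction i with
  | zero =>
    have val_zero {l : ℕ} {h : Fin n → Fin l} (hh : Monotone h) (hsurj : Function.Surjective h) :
        (h ⟨0, hi⟩ : ℕ) = 0 := by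
      obtain ⟨m, hm⟩ := hsurj ⟨0, (h ⟨0, hi⟩).pos⟩
      have hle : h ⟨0, hi⟩ ≤ h m := hh (Nat.zero_le _)
      rw [hm] at hle
      exact Nat.le_zero.1 hle
    rw [val_zero hg hs, val_zero hg' hs']
  | succ i ih =>
    have hcov : (⟨i, by omega⟩ : Fin n) ⋖ ⟨i + 1, hi⟩ := Fin.covBy_iff.2 (by simp)
    have val_succ {l : ℕ} {h : Fin n → Fin l} (hh : Monotone h) (hsurj : Function.Surjective h)
        (hne : h ⟨i, by omega⟩ ≠ h ⟨i + 1, hi⟩) :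
        (h ⟨i + 1, hi⟩ : ℕ) = h ⟨i, by omega⟩ + 1 :=
      (Nat.covBy_iff_add_one_eq.1 (Fin.covBy_iff.1
        ((wcovBy_of_monotone_of_surjective hh hsurj hcov.wcovBy).covBy_of_ne hne))).symm
    by_cases heq : g ⟨i, by omega⟩ = g ⟨i + 1, hi⟩
    · rw [← heq, ← (hker _ _ hcov).1 heq, ih]
    · rw [val_succ hg hs heq, val_succ hg' hs' (mt (hker _ _ hcov).2 heq), ih]

theorem eq_of_monotone_of_card_fiber_eq {n : ℕ} {κ : Type*} [PartialOrder κ] [DecidableEq κ]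
    {g g' : Fin n → κ} (hg : Monotone g) (hg' : Monotone g')
    (hcard : ∀ c, #{i | g i = c} = #{i | g' i = c}) : g = g' := by
  let e : Equiv.Perm (Fin n) := Equiv.ofFiberEquiv (f := g) (g := g') fun c ↦
    Fintype.equivOfCardEq (by simpa [Fintype.card_subtype] using hcard c)
  have he : g' ∘ e = g := funext fun i ↦ Equiv.ofFiberEquiv_map _ i
  rw [← he]
  exact Tuple.unique_monotone (σ := e) (τ := 1) (by rwa [he]) hg'

theorem exists_orderEmbedding_card_fiber_eq {α κ : Type*} [LinearOrder α] [Fintype α]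
    [DecidableEq κ] (g : α → κ) (b : κ → ℕ) (hb : ∀ c, b c ≤ #{i | g i = c}) :
    ∃ (m : ℕ) (f : Fin m ↪o α), ∀ c, #{i | g (f i) = c} = b c := by
  choose T hT hTcard using fun c ↦ Finset.exists_subset_card_eq (hb c)
  let U : Finset α := {i | i ∈ T (g i)}
  refine ⟨#U, U.orderEmbOfFin rfl, fun c ↦ ?_⟩
  calc #{i | g (U.orderEmbOfFin rfl i) = c}
      = #{x ∈ Finset.univ.map (U.orderEmbOfFin rfl).toEmbedding | g x = c} := by
        rw [Finset.filter_map, Finset.card_map]; rfl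
    _ = #(T c) := by
        rw [Finset.map_orderEmbOfFin_univ]
        congr 1
        ext x
        simp only [U, Finset.mem_filter, Finset.mem_univ, true_and]
        exact ⟨fun ⟨hx, hc⟩ ↦ hc ▸ hx, fun hx ↦
          have hc : g x = c := (Finset.mem_filter.1 (hT c hx)).2
          ⟨hc.symm ▸ hx, hc⟩⟩
    _ = b c := hTcard c

end MonotoneMaps

section Standardization

theorem perm_eq_of_lt_iff_lt {n : ℕ} {π π' : Equiv.Perm (Fin n)}
    (h : ∀ i j, π i < π j ↔ π' i < π' j) : π = π' := by
  have hmono : StrictMono (π' ∘ π.symm) := fun x y hxy ↦ (h _ _).1 (by simpa using hxy)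
  have hid : π' ∘ π.symm = id := (hmono.range_inj strictMono_id).1 (by simp)
  ext i
  simpa using congrArg Fin.val (congrFun hid (π i)).symm

theorem exists_perm_lt_iff_lt {n : ℕ} {α : Type*} [LinearOrder α] {f : Fin n → α}
    (hf : Function.Injective f) : ∃ π : Equiv.Perm (Fin n), ∀ i j, π i < π j ↔ f i < f j := by
  have hmono : StrictMono (f ∘ Tuple.sort f) :=
    (Tuple.monotone_sort f).strictMono_of_injective (hf.comp (Tuple.sort f).injective)
  exact ⟨(Tuple.sort f).symm, fun i j ↦ by rw [← hmono.lt_iff_lt]; simp⟩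

end Standardization

section Inflations

/-- `π` is an inflation of `τ` by increasing runs: each entry `c` of `τ` is replaced by an
increasing sequence of points of `π`, occupying the nonempty interval of positions `g ⁻¹' {c}`. -/
structure IsInflation {n k : ℕ} (π : Equiv.Perm (Fin n)) (τ : Equiv.Perm (Fin k))
    (g : Fin n → Fin k) : Prop where
  monotone : Monotone g
  surjective : Function.Surjective g
  lt_of_lt : ∀ i j, τ (g i) < τ (g j) → π i < π j
  lt_of_eq : ∀ i j, g i = g j → i < j → π i < π j

/-- No two adjacent positions of `τ` carry consecutive increasing values, so that `τ` is a proper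
inflation of no shorter permutation. -/
def IsRunReduced {k : ℕ} (τ : Equiv.Perm (Fin k)) : Prop :=
  ∀ c d, c ⋖ d → ¬ τ c ⋖ τ d

namespace IsInflation

variable {n k : ℕ} {π : Equiv.Perm (Fin n)} {τ : Equiv.Perm (Fin k)} {g : Fin n → Fin k}

theorem lt_iff (h : IsInflation π τ g) (i j : Fin n) :
    π i < π j ↔ τ (g i) < τ (g j) ∨ g i = g j ∧ i < j := by
  refine ⟨fun hπ ↦ ?_, fun hor ↦ hor.elim (h.lt_of_lt i j) fun hij ↦ h.lt_of_eq i j hij.1 hij.2⟩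
  rcases lt_trichotomy (τ (g i)) (τ (g j)) with hτ | hτ | hτ
  · exact Or.inl hτ
  · have hg : g i = g j := τ.injective hτ
    refine Or.inr ⟨hg, lt_of_not_ge fun hji ↦ hπ.not_ge ?_⟩
    rcases hji.eq_or_lt with rfl | hji
    exacts [le_rfl, (h.lt_of_eq j i hg.symm hji).le]
  · exact absurd (h.lt_of_lt j i hτ) hπ.asymm

theorem le_of_lt (h : IsInflation π τ g) {i j : Fin n} (hij : π i < π j) :
    τ (g i) ≤ τ (g j) :=
  ((h.lt_iff i j).1 hij).elim LT.lt.le fun hg ↦ (congrArg τ hg.1).le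

theorem trans {m : ℕ} {ρ : Equiv.Perm (Fin m)} {f : Fin k → Fin m} (h : IsInflation π τ g)
    (h' : IsInflation τ ρ f) : IsInflation π ρ (f ∘ g) where
  monotone := h'.monotone.comp h.monotone
  surjective := h'.surjective.comp h.surjective
  lt_of_lt i j hij := h.lt_of_lt i j (h'.lt_of_lt _ _ hij)
  lt_of_eq i j hf hij := by
    rcases (h.monotone hij.le).eq_or_lt with hg | hg
    exacts [h.lt_of_eq i j hg hij, h.lt_of_lt i j (h'.lt_of_eq _ _ hf hg)]

theorem comp_orderEmbedding (h : IsInflation π τ g) {m : ℕ} {σ : Equiv.Perm (Fin m)}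
    (f : Fin m ↪o Fin n) (hσ : ∀ i j, σ i < σ j ↔ π (f i) < π (f j))
    (hs : Function.Surjective (g ∘ f)) : IsInflation σ τ (g ∘ f) where
  monotone := h.monotone.comp f.monotone
  surjective := hs
  lt_of_lt i j hij := (hσ i j).2 (h.lt_of_lt _ _ hij)
  lt_of_eq i j hg hij := (hσ i j).2 (h.lt_of_eq _ _ hg (f.strictMono hij))

theorem perm_eq {π' : Equiv.Perm (Fin n)} (h : IsInflation π τ g) (h' : IsInflation π' τ g) :
    π = π' :=
  perm_eq_of_lt_iff_lt fun i j ↦ by rw [h.lt_iff, h'.lt_iff]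

theorem pattern_eq {τ' : Equiv.Perm (Fin k)} (h : IsInflation π τ g) (h' : IsInflation π τ' g) :
    τ = τ' := by
  refine perm_eq_of_lt_iff_lt fun c d ↦ ?_
  obtain ⟨i, rfl⟩ := h.surjective c
  obtain ⟨j, rfl⟩ := h.surjective d
  by_cases hij : g i = g j
  · simp [hij]
  · simpa [hij] using (h.lt_iff i j).symm.trans (h'.lt_iff i j)

theorem eq_iff_covBy (h : IsInflation π τ g) (hτ : IsRunReduced τ) {i j : Fin n} (hij : i ⋖ j) :
    g i = g j ↔ π i ⋖ π j := by
  constructor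
  · refine fun hg ↦ ⟨h.lt_of_eq i j hg hij.lt, fun x hix hxj ↦ ?_⟩
    obtain ⟨m, rfl⟩ := π.surjective x
    have hgm : g i = g m := τ.injective
      ((h.le_of_lt hix).antisymm ((h.le_of_lt hxj).trans_eq (congrArg τ hg.symm)))
    have him : i < m := by simpa [hgm] using (h.lt_iff i m).1 hix
    have hmj : m < j := by simpa [← hgm, hg] using (h.lt_iff m j).1 hxj
    exact hij.2 him hmj
  · intro hπ
    by_contra hg
    have hgcov : g i ⋖ g j :=
      (wcovBy_of_monotone_of_surjective h.monotone h.surjective hij.wcovBy).covBy_of_ne hg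
    refine hτ _ _ hgcov ⟨(h.le_of_lt hπ.lt).lt_of_ne (τ.injective.ne hg), fun x hix hxj ↦ ?_⟩
    obtain ⟨c, rfl⟩ := τ.surjective x
    obtain ⟨m, rfl⟩ := h.surjective c
    exact hπ.2 (h.lt_of_lt i m hix) (h.lt_of_lt m j hxj)

section Uniqueness

variable {k' : ℕ} {τ' : Equiv.Perm (Fin k')} {g' : Fin n → Fin k'}

theorem val_eq_val (h : IsInflation π τ g) (hτ : IsRunReduced τ) (h' : IsInflation π τ' g')
    (hτ' : IsRunReduced τ') (i : Fin n) : (g i : ℕ) = g' i :=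
  val_eq_val_of_forall_covBy h.monotone h.surjective h'.monotone h'.surjective
    (fun _ _ hij ↦ (h.eq_iff_covBy hτ hij).trans (h'.eq_iff_covBy hτ' hij).symm) i

theorem length_eq (h : IsInflation π τ g) (hτ : IsRunReduced τ) (h' : IsInflation π τ' g')
    (hτ' : IsRunReduced τ') : k = k' := by
  have hval : Fin.val ∘ g = Fin.val ∘ g' := funext (h.val_eq_val hτ h' hτ')
  have hrange : Set.Iio k = Set.Iio k' := by
    rw [← Fin.range_val, ← Fin.range_val, ← h.surjective.range_comp, hval,
      h'.surjective.range_comp]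
  exact Set.Iio_injective hrange

end Uniqueness

end IsInflation

/-- `X` labels the points by columns and `Y` by rows; the columns and rows that are used match up
and each of the resulting cells is increasing. -/
theorem exists_isInflation_of_labels {n : ℕ} {π : Equiv.Perm (Fin n)} {κ β : Type*} [LinearOrder κ]
    [LinearOrder β] {X : Fin n → κ} {Y : Fin n → β} (hX : Monotone X)
    (hY : ∀ i j, Y i < Y j → π i < π j) (hXY : ∀ i j, X i = X j ↔ Y i = Y j)
    (hinc : ∀ i j, X i = X j → i < j → π i < π j) :
    ∃ (τ : Equiv.Perm (Fin #(Finset.univ.image X))) (g : _), IsInflation π τ g := by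
  let S := Finset.univ.image X
  let e : Fin #S ≃o S := S.orderIsoOfFin rfl
  let g : Fin n → Fin #S := fun i ↦ e.symm ⟨X i, Finset.mem_image_of_mem X (Finset.mem_univ i)⟩
  have hg (i j : Fin n) : g i = g j ↔ X i = X j := by simp [g]
  have hs : Function.Surjective g := by
    intro c
    obtain ⟨i, -, hi⟩ := Finset.mem_image.1 (e c).2
    exact ⟨i, by simp [g, hi]⟩
  have hsection (i : Fin n) : Y (Function.surjInv hs (g i)) = Y i := by
    rw [← hXY, ← hg, Function.surjInv_eq hs]
  obtain ⟨τ, hτ⟩ := exists_perm_lt_iff_lt (f := Y ∘ Function.surjInv hs) fun c d hcd ↦ by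
    simpa only [Function.surjInv_eq] using (hg _ _).2 ((hXY _ _).2 hcd)
  refine ⟨τ, g, fun i j hij ↦ e.symm.monotone (hX hij), hs, fun i j hij ↦ hY i j ?_,
    fun i j hij ↦ hinc i j ((hg i j).1 hij)⟩
  simpa only [hτ, Function.comp_apply, hsection] using hij

theorem exists_isInflation_of_not_isRunReduced {k : ℕ} {τ : Equiv.Perm (Fin k)}
    (hτ : ¬ IsRunReduced τ) :
    ∃ k' < k, ∃ (τ' : Equiv.Perm (Fin k')) (g : _), IsInflation τ τ' g := by
  obtain ⟨c, d, hcd, hτcd⟩ : ∃ c d, c ⋖ d ∧ τ c ⋖ τ d := by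
    simpa only [IsRunReduced, not_forall, not_not, exists_prop] using hτ
  -- Merging the positions `c` and `d` drops the label `d`.
  let X : Fin k → Fin k := Function.update id d c
  have hXd : X d = c := Function.update_self ..
  have hX {i : Fin k} (hi : d ≠ i) : X i = i := Function.update_of_ne hi.symm ..
  have hcard : #(Finset.univ.image X) < k := by
    have hd : d ∉ Finset.univ.image X := by
      simp only [Finset.mem_image, Finset.mem_univ, true_and, not_exists]
      intro i hi
      rcases eq_or_ne d i with rfl | hid
      exacts [hcd.lt.ne (hXd.symm.trans hi), hid ((hX hid).symm.trans hi).symm]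
    simpa using Finset.card_lt_univ_of_notMem hd
  have hτX (i : Fin k) : τ (X i) = Function.update id (τ d) (τ c) (τ i) := by
    simp only [X, Function.update_apply, id_eq, apply_ite τ, τ.injective.eq_iff]
  refine ⟨_, hcard, exists_isInflation_of_labels (Y := τ ∘ X) (monotone_update_id_of_covBy hcd)
    (fun i j hij ↦ ?_) (fun i j ↦ τ.injective.eq_iff.symm) ?_⟩
  · simp only [Function.comp_apply, hτX] at hij
    exact (monotone_update_id_of_covBy hτcd).reflect_lt hij
  · intro i j hXij hij
    rcases eq_or_ne d i with rfl | hid <;> rcases eq_or_ne d j with rfl | hjd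
    · exact absurd hij (lt_irrefl _)
    · rw [hXd, hX hjd] at hXij
      exact absurd (hXij ▸ hcd.lt) hij.asymm
    · rw [hXd, hX hid] at hXij
      exact hXij ▸ hτcd.lt
    · rw [hX hid, hX hjd] at hXij
      exact absurd hXij hij.ne

theorem IsInflation.exists_isRunReduced {n k : ℕ} {π : Equiv.Perm (Fin n)} {τ : Equiv.Perm (Fin k)}
    {g : Fin n → Fin k} (h : IsInflation π τ g) :
    ∃ k' ≤ k, ∃ τ' : Equiv.Perm (Fin k'), IsRunReduced τ' ∧ ∃ g', IsInflation π τ' g' := by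
  induction k using Nat.strong_induction_on with
  | _ k ih =>
    by_cases hτ : IsRunReduced τ
    · exact ⟨k, le_rfl, τ, hτ, g, h⟩
    · obtain ⟨m, hm, ρ, f, hρ⟩ := exists_isInflation_of_not_isRunReduced hτ
      obtain ⟨k', hk', hred⟩ := ih m hm (h.trans hρ)
      exact ⟨k', hk'.trans hm.le, hred⟩

end Inflations

section ExcessVectors

variable {n k : ℕ}

/-- `π` is the inflation of `τ` in which the run replacing the entry `c` has length `a c + 1`. The
excess `a c` of the length over `1` is recorded, so that `a` ranges over all of `ℕᵏ`. -/
def IsInflationBy (π : Equiv.Perm (Fin n)) (τ : Equiv.Perm (Fin k)) (a : Fin k → ℕ) : Prop :=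
  ∃ g, IsInflation π τ g ∧ ∀ c, #{i | g i = c} = a c + 1

theorem IsInflation.exists_isInflationBy {π : Equiv.Perm (Fin n)} {τ : Equiv.Perm (Fin k)}
    {g : Fin n → Fin k} (h : IsInflation π τ g) : ∃ a, IsInflationBy π τ a := by
  refine ⟨fun c ↦ #{i | g i = c} - 1, g, h, fun c ↦ (Nat.sub_add_cancel ?_).symm⟩
  obtain ⟨i, hi⟩ := h.surjective c
  exact Finset.card_pos.2 ⟨i, by simpa using hi⟩

namespace IsInflationBy

variable {π : Equiv.Perm (Fin n)} {τ : Equiv.Perm (Fin k)} {a : Fin k → ℕ}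

theorem sum_add (h : IsInflationBy π τ a) : ∑ c, a c + k = n := by
  obtain ⟨g, -, hcard⟩ := h
  calc ∑ c, a c + k = ∑ c, #{i | g i = c} := by simp [hcard, Finset.sum_add_distrib]
    _ = n := by
      rw [← Finset.card_eq_sum_card_fiberwise fun i _ ↦ Finset.mem_coe.2 (Finset.mem_univ (g i))]
      simp

theorem perm_eq {π' : Equiv.Perm (Fin n)} (h : IsInflationBy π τ a) (h' : IsInflationBy π' τ a) :
    π = π' := by
  obtain ⟨g, hg, hcard⟩ := h
  obtain ⟨g', hg', hcard'⟩ := h'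
  obtain rfl : g = g' := eq_of_monotone_of_card_fiber_eq hg.monotone hg'.monotone fun c ↦
    (hcard c).trans (hcard' c).symm
  exact hg.perm_eq hg'

theorem excess_eq {b : Fin k → ℕ} (hτ : IsRunReduced τ) (ha : IsInflationBy π τ a)
    (hb : IsInflationBy π τ b) : a = b := by
  obtain ⟨g, hg, hcard⟩ := ha
  obtain ⟨g', hg', hcard'⟩ := hb
  obtain rfl : g = g' := funext fun i ↦ Fin.ext (hg.val_eq_val hτ hg' hτ i)
  exact funext fun c ↦ Nat.succ_injective ((hcard c).symm.trans (hcard' c))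

theorem exists_permContains_of_le {b : Fin k → ℕ} (h : IsInflationBy π τ a) (hba : b ≤ a) :
    ∃ (m : ℕ) (σ : Equiv.Perm (Fin m)), PermContains σ π ∧ IsInflationBy σ τ b := by
  obtain ⟨g, hg, hcard⟩ := h
  obtain ⟨m, f, hf⟩ := exists_orderEmbedding_card_fiber_eq g (fun c ↦ b c + 1) fun c ↦ by
    rw [hcard]
    exact Nat.succ_le_succ (hba c)
  obtain ⟨σ, hσ⟩ := exists_perm_lt_iff_lt (π.injective.comp f.injective)
  have hs : Function.Surjective (g ∘ f) := fun c ↦ by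
    obtain ⟨i, hi⟩ := Finset.card_pos.1 ((Nat.succ_pos (b c)).trans_eq (hf c).symm)
    exact ⟨i, by simpa using hi⟩
  exact ⟨m, σ, ⟨f, f.strictMono, hσ⟩, g ∘ f, hg.comp_orderEmbedding f hσ hs, hf⟩

end IsInflationBy

/-- The excess vectors of all members of the class `C` that are inflations of `τ`. -/
def excessVectors (C : ∀ n : ℕ, Set (Equiv.Perm (Fin n))) (τ : Equiv.Perm (Fin k)) :
    Set (Fin k → ℕ) :=
  {a | ∃ n, ∃ π ∈ C n, IsInflationBy π τ a}

/-- The members of `C` of length `n` that are inflations of `τ`. -/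
def inflationsIn (C : ∀ n : ℕ, Set (Equiv.Perm (Fin n))) (τ : Equiv.Perm (Fin k)) (n : ℕ) :
    Set (Equiv.Perm (Fin n)) :=
  {π ∈ C n | ∃ g, IsInflation π τ g}

variable {C : ∀ n : ℕ, Set (Equiv.Perm (Fin n))} {τ : Equiv.Perm (Fin k)}

theorem IsPermClass.isLowerSet_excessVectors (hC : IsPermClass C) (τ : Equiv.Perm (Fin k)) :
    IsLowerSet (excessVectors C τ) := by
  rintro a b hba ⟨n, π, hπ, ha⟩
  obtain ⟨m, σ, hσ, hb⟩ := ha.exists_permContains_of_le hba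
  exact ⟨m, σ, hC m n σ π hπ hσ, hb⟩

theorem ncard_inflationsIn_add (hτ : IsRunReduced τ) (n : ℕ) :
    (inflationsIn C τ (n + k)).ncard = (weightLayer (excessVectors C τ) n).ncard := by
  have hfin := finite_weightLayer (excessVectors C τ) n
  rw [Set.ncard_eq_toFinset_card _ (Set.toFinite _), Set.ncard_eq_toFinset_card _ hfin]
  apply le_antisymm
  · refine Finset.card_le_card_of_forall_subsingleton (IsInflationBy · τ ·) (fun π hπ ↦ ?_)
      fun a _ π hπ π' hπ' ↦ hπ.2.perm_eq hπ'.2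
    obtain ⟨hπC, g, hg⟩ := (Set.Finite.mem_toFinset _).1 hπ
    obtain ⟨a, ha⟩ := hg.exists_isInflationBy
    exact ⟨a, hfin.mem_toFinset.2 ⟨⟨_, π, hπC, ha⟩, Nat.add_right_cancel ha.sum_add⟩, ha⟩
  · refine Finset.card_le_card_of_forall_subsingleton' (IsInflationBy · τ ·) (fun a ha ↦ ?_)
      fun π _ a ha b hb ↦ ha.2.excess_eq hτ hb.2
    obtain ⟨⟨m, π, hπC, hπ⟩, hsum⟩ := hfin.mem_toFinset.1 ha
    obtain rfl : n + k = m := hsum ▸ hπ.sum_add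
    exact ⟨π, (Set.Finite.mem_toFinset _).2 ⟨hπC, hπ.imp fun _ hg ↦ hg.1⟩, hπ⟩

theorem IsPermClass.eventuallyPolynomial_ncard_inflationsIn (hC : IsPermClass C)
    (hτ : IsRunReduced τ) : EventuallyPolynomial fun n ↦ ((inflationsIn C τ n).ncard : ℚ) := by
  rw [← EventuallyPolynomial.comp_add_iff k]
  simp only [ncard_inflationsIn_add hτ]
  exact eventuallyPolynomial_ncard_weightLayer ⟨_, hC.isLowerSet_excessVectors τ⟩

theorem IsPermClass.eventuallyPolynomial_card (hC : IsPermClass C) (t : ℕ)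
    (hinf : ∀ n, ∀ π ∈ C n, ∃ k ≤ t, ∃ (τ : Equiv.Perm (Fin k)) (g : _), IsInflation π τ g) :
    EventuallyPolynomial fun n ↦ (Nat.card (C n) : ℚ) := by
  classical
  let ι := {p : Σ k : Fin (t + 1), Equiv.Perm (Fin k) // IsRunReduced p.2}
  have hunion (n : ℕ) : C n = ⋃ p : ι, inflationsIn C p.1.2 n := by
    refine Set.Subset.antisymm (fun π hπ ↦ ?_) (Set.iUnion_subset fun p π hπ ↦ hπ.1)
    obtain ⟨k, hk, τ, g, h⟩ := hinf n π hπ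
    obtain ⟨k', hk', τ', hτ', h'⟩ := h.exists_isRunReduced
    exact Set.mem_iUnion.2 ⟨⟨⟨⟨k', by omega⟩, τ'⟩, hτ'⟩, hπ, h'⟩
  have hdisj (n : ℕ) : Pairwise (Function.onFun Disjoint fun p : ι ↦ inflationsIn C p.1.2 n) := by
    rintro ⟨⟨⟨k, hk⟩, τ⟩, hτ⟩ ⟨⟨⟨k', hk'⟩, τ'⟩, hτ'⟩ hne
    refine Set.disjoint_left.2 fun π ⟨_, g, h⟩ ⟨_, g', h'⟩ ↦ hne ?_
    obtain rfl : k = k' := h.length_eq hτ h' hτ'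
    obtain rfl : g = g' := funext fun i ↦ Fin.ext (h.val_eq_val hτ h' hτ' i)
    obtain rfl : τ = τ' := h.pattern_eq h'
    rfl
  have hcard (n : ℕ) : (Nat.card (C n) : ℚ) = ∑ p : ι, ((inflationsIn C p.1.2 n).ncard : ℚ) := by
    rw [Nat.card_coe_set_eq, hunion, Set.ncard_iUnion_of_finite (fun _ ↦ Set.toFinite _) (hdisj n),
      finsum_eq_sum_of_fintype, Nat.cast_sum]
  simp only [hcard]
  exact .sum _ fun p _ ↦ hC.eventuallyPolynomial_ncard_inflationsIn p.2

end ExcessVectors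

section Griddings

theorem exists_castSucc_le_lt_succ {α : Type*} [LinearOrder α] {t : ℕ} {c : Fin (t + 1) → α} {x : α}
    (h0 : c 0 ≤ x) (hlast : x < c (Fin.last t)) : ∃ k : Fin t, c k.castSucc ≤ x ∧ x < c k.succ := by
  by_contra! hstep
  exact hlast.not_ge (Fin.induction h0 hstep (Fin.last t))

theorem le_of_castSucc_le_of_lt_succ {α : Type*} [Preorder α] {t : ℕ} {c : Fin (t + 1) → α}
    (hc : Monotone c) {x y : α} (hxy : x ≤ y) {k l : Fin t} (hk : c k.castSucc ≤ x)
    (hl : y < c l.succ) : k ≤ l := by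
  by_contra! hlk
  exact (hk.trans hxy).not_gt (hl.trans_le (hc (Fin.succ_le_castSucc_iff.2 hlk)))

theorem InGrid.exists_isInflation {n t u : ℕ} {M : Fin t → Fin u → SignType}
    (h01 : ∀ k l, M k l = 0 ∨ M k l = 1)
    (hcol : ∀ k l l', M k l = 1 → M k l' = 1 → l = l')
    (hrow : ∀ l k k', M k l = 1 → M k' l = 1 → k = k')
    {π : Equiv.Perm (Fin n)} (h : InGrid M π) :
    ∃ k ≤ t, ∃ (τ : Equiv.Perm (Fin k)) (g : _), IsInflation π τ g := by
  obtain ⟨c, r, hc, hr, hc0, hcn, hr0, hrn, hblock⟩ := h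
  choose X hX hX' using fun i : Fin n ↦
    exists_castSucc_le_lt_succ (hc0.trans_le (Nat.zero_le i)) (i.isLt.trans_eq hcn.symm)
  choose Y hY hY' using fun i : Fin n ↦
    exists_castSucc_le_lt_succ (hr0.trans_le (Nat.zero_le (π i))) ((π i).isLt.trans_eq hrn.symm)
  have hin (i : Fin n) : InBlock π c r (X i) (Y i) i := ⟨hX i, hX' i, hY i, hY' i⟩
  have hone (i : Fin n) : M (X i) (Y i) = 1 :=
    (h01 _ _).resolve_left fun hzero ↦ (hblock _ _).2.2 hzero i (hin i)
  have hXY (i j : Fin n) : X i = X j ↔ Y i = Y j :=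
    ⟨fun hij ↦ hcol _ _ _ (hone i) (hij ▸ hone j), fun hij ↦ hrow _ _ _ (hone i) (hij ▸ hone j)⟩
  refine ⟨_, by simpa using Finset.card_le_univ (Finset.univ.image X),
    exists_isInflation_of_labels (fun i j hij ↦ ?_) (fun i j hij ↦ ?_) hXY fun i j hij hlt ↦ ?_⟩
  · exact le_of_castSucc_le_of_lt_succ hc hij (hX i) (hX' j)
  · by_contra! hji
    exact hij.not_ge (le_of_castSucc_le_of_lt_succ hr hji (hY j) (hY' i))
  · have hj : InBlock π c r (X i) (Y i) j := by
      rw [hij, (hXY i j).1 hij]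
      exact hin j
    exact (hblock _ _).1 (hone i) i j (hin i) hj hlt

end Griddings

theorem permutation_matrix_grid_polynomial_general {t u : ℕ} (M : Fin t → Fin u → SignType)
    (h01 : ∀ k l, M k l = 0 ∨ M k l = 1)
    (hcol : ∀ k l l', M k l = 1 → M k l' = 1 → l = l')
    (hrow : ∀ l k k', M k l = 1 → M k' l = 1 → k = k')
    (C : ∀ n : ℕ, Set (Equiv.Perm (Fin n))) (hC : IsPermClass C)
    (hsub : ∀ n : ℕ, ∀ π ∈ C n, InGrid M π) :
    ∃ (p : Polynomial ℚ) (N : ℕ), ∀ n : ℕ, N ≤ n →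
      (Nat.card (C n) : ℚ) = p.eval (n : ℚ) := by
  obtain ⟨p, hp⟩ := hC.eventuallyPolynomial_card t fun n π hπ ↦
    (hsub n π hπ).exists_isInflation h01 hcol hrow
  exact ⟨p, eventually_atTop.1 hp⟩

/-- **Theorem (Atkinson).** If `M` is a permutation matrix (a square 0/1 matrix with exactly
one `1` in each row and each column), then every permutation class contained in `Grid(M)`
has eventually polynomial enumeration. -/
theorem permutation_matrix_grid_polynomial (t : ℕ) (M : Fin t → Fin t → SignType)
    (h01 : ∀ k l, M k l = 0 ∨ M k l = 1)
    (hcol : ∀ k, ∃! l, M k l = 1)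
    (hrow : ∀ l, ∃! k, M k l = 1)
    (C : ∀ n : ℕ, Set (Equiv.Perm (Fin n))) (hC : IsPermClass C)
    (hsub : ∀ n : ℕ, ∀ π ∈ C n, InGrid M π) :
    ∃ (p : Polynomial ℚ) (N : ℕ), ∀ n : ℕ, N ≤ n →
      (Nat.card (C n) : ℚ) = p.eval (n : ℚ) :=
  permutation_matrix_grid_polynomial_general M h01 (fun k _ _ ↦ (hcol k).unique)
    (fun l _ _ ↦ (hrow l).unique) C hC hsub
end

section
/- If M is a matrix with entries in {0, 1, −1} whose bipartite graph G(M) is a star (possibly together with isolated vertices), then every permutation class C contained in Grid(M) has a rational generating function ∑_{n≥0} |C_n| x^n. -/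
/-- The bipartite graph `G(M)` is a star (possibly together with isolated vertices):
all edges share a common vertex, which is either a column vertex or a row vertex. -/
def IsStarMat {t u : ℕ} (M : Fin t → Fin u → SignType) : Prop :=
  (∃ k₀ : Fin t, ∀ (k : Fin t) (l : Fin u), M k l ≠ 0 → k = k₀) ∨
  (∃ l₀ : Fin u, ∀ (k : Fin t) (l : Fin u), M k l ≠ 0 → l = l₀)

/-!
The case in which the centre of the star is a column follows from the case of a row by inverting all
permutations. In the row case, a gridded permutation is determined by the word recording, for each
value in increasing order, the column of the point with that value. The words of all griddings of
members of a class `C` are closed under deleting letters, so by Higman's lemma they have only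
finitely many left quotients and form a regular language.

A permutation may have several griddings. It has exactly one in which no single point can be moved
to an earlier column without changing the permutation, since the leftmost point at which two such
griddings differ could be moved in one of them. Whether a point can be moved to a given column
depends only on which letters occur before it and which after it in the word, so the words admitting
such a move are a regular language as well. Hence `|C_n|` counts the words of length `n` of a
regular language, and the transfer matrix of an automaton shows that the generating function is
rational.
-/

namespace StarGrid

section RationalSeries

open Polynomial PowerSeries Matrix

/-- A power series is *rational* if it is a quotient of two polynomials. The denominator may have
zero constant term, so the quotient is expressed by clearing it. -/
def IsRational {R : Type*} [CommSemiring R] (F : R⟦X⟧) : Prop :=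
  ∃ p q : R[X], q ≠ 0 ∧ F * (q : R⟦X⟧) = (p : R⟦X⟧)

variable {R S : Type*} [CommRing R] [Fintype S]

theorem det_mul_eq_adjugate_mulVec [DecidableEq S] {A : Matrix S S R} {v b : S → R}
    (h : A *ᵥ v = b) (s : S) : A.det * v s = (A.adjugate *ᵥ b) s := by
  rw [← h, mulVec_mulVec, adjugate_mul, smul_mulVec, one_mulVec, Pi.smul_apply, smul_eq_mul]

theorem one_sub_X_smul_mulVec_mk [DecidableEq S] {T : Matrix S S R} {f : ℕ → S → R}
    (hf : ∀ n, f (n + 1) = T *ᵥ f n) :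
    (1 - (PowerSeries.X : R⟦X⟧) • T.map PowerSeries.C) *ᵥ (fun s => PowerSeries.mk fun n => f n s)
      = fun s => PowerSeries.C (f 0 s) := by
  rw [sub_mulVec, one_mulVec, smul_mulVec]
  ext s n
  cases n with
  | zero => simp [PowerSeries.coeff_zero_eq_constantCoeff]
  | succ n => simp [PowerSeries.coeff_succ_X_mul, hf, mulVec, dotProduct]

theorem isRational_of_mulVec_recurrence [Nontrivial R] {T : Matrix S S R} {f : ℕ → S → R}
    (hf : ∀ n, f (n + 1) = T *ᵥ f n) (s : S) : IsRational (PowerSeries.mk fun n => f n s) := by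
  classical
  let φ : R[X] →+* R⟦X⟧ := Polynomial.coeToPowerSeries.ringHom
  let A : Matrix S S R[X] := 1 - (X : R[X]) • T.map Polynomial.C
  let b : S → R[X] := fun s => Polynomial.C (f 0 s)
  have hA : φ.mapMatrix A = 1 - (PowerSeries.X : R⟦X⟧) • T.map PowerSeries.C := by
    ext i j : 1
    simp [φ, A, one_apply, apply_ite, PowerSeries.X_mul]
  have hb : φ ∘ b = fun s => PowerSeries.C (f 0 s) := by
    funext s
    simp [φ, b]
  have hsystem : φ.mapMatrix A *ᵥ (fun s => PowerSeries.mk fun n => f n s) = φ ∘ b := by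
    rw [hA, hb, one_sub_X_smul_mulVec_mk hf]
  have hdet : A.det ≠ 0 := by
    intro h
    simpa [charpolyRev, A, h] using eval_charpolyRev (M := T)
  refine ⟨(A.adjugate *ᵥ b) s, A.det, hdet, ?_⟩
  calc (PowerSeries.mk fun n => f n s) * φ A.det
      = (φ.mapMatrix A).det * PowerSeries.mk fun n => f n s := by rw [mul_comm, φ.map_det]
    _ = ((φ.mapMatrix A).adjugate *ᵥ (φ ∘ b)) s := det_mul_eq_adjugate_mulVec hsystem s
    _ = φ ((A.adjugate *ᵥ b) s) := by rw [← φ.map_adjugate, φ.map_mulVec]; rfl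

end RationalSeries

section RegularLanguage

open List

variable {α : Type*}

/-- The number of words of length `n` in the language `L`. -/
noncomputable def wordCount (L : Language α) (n : ℕ) : ℕ :=
  Nat.card {w : Fin n → α // ofFn w ∈ L}

theorem wordCount_succ [Fintype α] (L : Language α) (n : ℕ) :
    wordCount L (n + 1) = ∑ a, wordCount (L.leftQuotient [a]) n := by
  unfold wordCount
  rw [← Nat.card_sigma]
  exact Nat.card_congr
    { toFun w := ⟨w.1 0, Fin.tail w.1, by simpa using! w.2⟩
      invFun p := ⟨Fin.cons p.1 p.2.1, by simpa using p.2.2⟩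
      left_inv w := Subtype.ext (Fin.cons_self_tail w.1)
      right_inv _ := rfl }

theorem isRational_wordCount [Finite α] {L : Language α} (hL : L.IsRegular) :
    IsRational (PowerSeries.mk fun n => (wordCount L n : ℚ)) := by
  classical
  have := Fintype.ofFinite α
  obtain ⟨S, _, M, rfl⟩ := hL
  let T : Matrix S S ℚ := fun s s' => ∑ a, if M.step s a = s' then 1 else 0
  refine isRational_of_mulVec_recurrence (T := T)
    (f := fun n s => (wordCount (M.acceptsFrom s) n : ℚ)) (fun n => ?_) M.start
  funext s
  have hstep (a : α) : (M.acceptsFrom s).leftQuotient [a] = M.acceptsFrom (M.step s a) := rfl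
  simp only [wordCount_succ, hstep, Nat.cast_sum, T, Matrix.mulVec, dotProduct, Finset.sum_mul]
  rw [Finset.sum_comm]
  simp

theorem isRegular_iSup {ι : Type*} [Finite ι] {L : ι → Language α} (hL : ∀ i, (L i).IsRegular) :
    (⨆ i, L i).IsRegular := by
  have := Fintype.ofFinite ι
  rw [← Finset.sup_univ_eq_iSup]
  refine Finset.sup_induction ?_ (fun _ h _ h' => h.add h') fun i _ => hL i
  exact ⟨Unit, inferInstance, ⟨fun s _ => s, (), ∅⟩, rfl⟩

/-- Higman's lemma over a finite alphabet. -/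
theorem wellQuasiOrdered_sublist [Finite α] : WellQuasiOrdered (@List.Sublist α) := by
  have h := Set.PartiallyWellOrderedOn.partiallyWellOrderedOn_sublistForall₂ (α := α) (· = ·)
    (Set.toFinite Set.univ).partiallyWellOrderedOn
  have hsublist : SublistForall₂ (· = ·) = @List.Sublist α := by
    ext x y
    simp [sublistForall₂_iff, forall₂_eq_eq_eq]
  simpa [hsublist, Set.partiallyWellOrderedOn_univ_iff] using h

theorem not_strictAnti_of_wellQuasiOrdered {r : α → α → Prop} (hr : WellQuasiOrdered r)
    {K : ℕ → Set α} (hK : ∀ n x y, r x y → y ∈ K n → x ∈ K n) : ¬ StrictAnti K := by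
  intro hanti
  choose x hx hx' using fun n => Set.exists_of_ssubset (hanti (Nat.lt_succ_self n))
  obtain ⟨m, n, hmn, hr⟩ := hr x
  exact hx' m (hK _ _ _ hr (hanti.antitone (Nat.succ_le_of_lt hmn) (hx n)))

/-- A language is *sublist-closed* if it is closed under deleting letters from its words. -/
def SublistClosed (L : Language α) : Prop :=
  ∀ ⦃x y : List α⦄, x <+ y → y ∈ L → x ∈ L

/-- A strictly increasing sequence of words with distinct left quotients would give a strictly
decreasing sequence of sublist-closed languages. -/
theorem SublistClosed.isRegular [Finite α] {L : Language α} (hL : SublistClosed L) :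
    L.IsRegular := by
  refine .of_finite_range_leftQuotient (not_not.1 fun hinf => ?_)
  obtain ⟨q, hq⟩ := Set.Infinite.natEmbedding _ hinf
  choose w hw using fun n => (q n).2
  have : IsPreorder (List α) List.Sublist :=
    { refl := Sublist.refl, trans := fun _ _ _ => Sublist.trans }
  obtain ⟨g, hg⟩ := wellQuasiOrdered_sublist.exists_monotone_subseq w
  have hanti : Antitone fun n => L.leftQuotient (w (g n)) := fun m n hmn y hy =>
    hL ((hg m n hmn).append_right y) hy
  have hinj : Function.Injective fun n => L.leftQuotient (w (g n)) := fun m n h =>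
    g.injective (hq (Subtype.ext (by simpa only [hw] using h)))
  have hclosed (n : ℕ) (x y : List α) (hxy : x <+ y) (hy : y ∈ L.leftQuotient (w (g n))) :
      x ∈ L.leftQuotient (w (g n)) := hL (hxy.append_left _) hy
  exact not_strictAnti_of_wellQuasiOrdered wellQuasiOrdered_sublist hclosed
    (hanti.strictAnti_of_injective hinj)

/-- The words `x ++ a :: y` with all letters of `x` in `P` and all letters of `y` in `Q`. They
express conditions on one letter that depend only on which letters precede and which follow it. -/
def markedWords (P : Set α) (a : α) (Q : Set α) : Language α :=
  {l | ∃ x y, l = x ++ a :: y ∧ (∀ b ∈ x, b ∈ P) ∧ ∀ b ∈ y, b ∈ Q}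

variable {P Q : Set α} {a : α}

theorem append_mem_markedWords {x y : List α} :
    x ++ y ∈ markedWords P a Q ↔
      (∀ b ∈ x, b ∈ P) ∧ y ∈ markedWords P a Q ∨ x ∈ markedWords P a Q ∧ ∀ b ∈ y, b ∈ Q := by
  constructor
  · rintro ⟨x', y', h, hx', hy'⟩
    rcases append_eq_append_iff.1 h with ⟨z, rfl, rfl⟩ | ⟨_ | ⟨b, z⟩, rfl, hsplit⟩
    · simp only [mem_append, or_imp, forall_and] at hx'
      exact .inl ⟨hx'.1, z, y', rfl, hx'.2, hy'⟩
    · simp only [append_nil]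
      exact .inl ⟨hx', [], y', hsplit.symm, by simp, hy'⟩
    · rw [cons_append, cons_eq_cons] at hsplit
      obtain ⟨rfl, rfl⟩ := hsplit
      simp only [mem_append, or_imp, forall_and] at hy'
      exact .inr ⟨⟨x', z, rfl, hx', hy'.1⟩, hy'.2⟩
  · rintro (⟨hx, x', y', rfl, hx', hy'⟩ | ⟨⟨x', y', rfl, hx', hy'⟩, hy⟩)
    · exact ⟨x ++ x', y', by simp, by simpa [or_imp, forall_and] using ⟨hx, hx'⟩, hy'⟩
    · exact ⟨x', y' ++ y, by simp, hx', by simpa [or_imp, forall_and] using ⟨hy', hy⟩⟩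

theorem isRegular_markedWords : (markedWords P a Q).IsRegular := by
  let quotient (s : Prop × Prop) : Language α :=
    {y | s.1 ∧ y ∈ markedWords P a Q ∨ s.2 ∧ ∀ b ∈ y, b ∈ Q}
  refine .of_finite_range_leftQuotient ((Set.finite_range quotient).subset ?_)
  rintro _ ⟨x, rfl⟩
  exact ⟨(∀ b ∈ x, b ∈ P, x ∈ markedWords P a Q), Set.ext fun _ => append_mem_markedWords.symm⟩

theorem nil_notMem_markedWords : [] ∉ markedWords P a Q := by
  rintro ⟨x, y, h, -, -⟩
  simp at h

theorem singleton_mem_markedWords {b : α} : [b] ∈ markedWords P a Q ↔ b = a := by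
  constructor
  · rintro ⟨x, y, h, -, -⟩
    rcases x with _ | ⟨c, x⟩ <;> simp_all
  · rintro rfl
    exact ⟨[], [], by simp⟩

theorem ofFn_mem_markedWords {n : ℕ} {w : Fin n → α} :
    ofFn w ∈ markedWords P a Q ↔
      ∃ v, w v = a ∧ (∀ v' < v, w v' ∈ P) ∧ ∀ v' > v, w v' ∈ Q := by
  induction n with
  | zero => simpa using nil_notMem_markedWords
  | succ n ih =>
    rw [ofFn_succ, ← singleton_append, append_mem_markedWords, ih, singleton_mem_markedWords,
      Fin.exists_fin_succ, or_comm]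
    simp [Fin.forall_fin_succ, and_assoc, and_left_comm (b := w 0 ∈ P)]

end RegularLanguage

section Sorting

variable {n : ℕ} {K : Type*} [LinearOrder K] {f g : Fin n → K}

theorem sort_eq_iff_strictMono (hf : f.Injective) {π : Equiv.Perm (Fin n)} :
    Tuple.sort f = π ↔ StrictMono (f ∘ π) := by
  rw [eq_comm, Tuple.eq_sort_iff]
  refine ⟨fun h => h.1.strictMono_of_injective (hf.comp π.injective), fun h => ⟨h.monotone, ?_⟩⟩
  exact fun i j hij heq => absurd heq (h hij).ne

theorem sort_symm_lt_sort_symm (hf : f.Injective) {v v' : Fin n} :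
    (Tuple.sort f).symm v < (Tuple.sort f).symm v' ↔ f v < f v' := by
  simpa using (((sort_eq_iff_strictMono hf).1 rfl).lt_iff_lt
    (a := (Tuple.sort f).symm v) (b := (Tuple.sort f).symm v')).symm

theorem sort_eq_sort_iff (hf : f.Injective) (hg : g.Injective) :
    Tuple.sort f = Tuple.sort g ↔ ∀ v v', f v < f v' ↔ g v < g v' := by
  constructor
  · intro h v v'
    rw [← sort_symm_lt_sort_symm hf, h, sort_symm_lt_sort_symm hg]
  · intro h
    rw [sort_eq_iff_strictMono hf]
    exact fun i j hij => (h _ _).2 ((sort_eq_iff_strictMono hg).1 rfl hij)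

theorem sort_update_eq_sort_iff (hf : f.Injective) {v : Fin n} {x : K}
    (hx : (Function.update f v x).Injective) (hlt : x < f v) :
    Tuple.sort (Function.update f v x) = Tuple.sort f ↔ ∀ v', ¬ (x < f v' ∧ f v' < f v) := by
  have hne {v'} (hv : v' ≠ v) : f v' ≠ x := by
    simpa [hv] using hx.ne hv
  rw [sort_eq_sort_iff hx hf]
  constructor
  · intro h v' hv'
    have hv : v' ≠ v := fun h => hv'.2.ne (h ▸ rfl)
    have := h v v'
    simp only [Function.update_self, Function.update_of_ne hv] at this
    exact hv'.2.not_gt (this.1 hv'.1)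
  · intro h a b
    have := h a
    have := h b
    rcases eq_or_ne a v with ha | ha <;> rcases eq_or_ne b v with hb | hb
    · simp [ha, hb]
    · have := hne hb
      grind
    · have := hne ha
      grind
    · simp [ha, hb]

end Sorting

section GridPerm

variable {A : Type*} (inc : Set A)

open scoped Classical in
/-- The points of a one-row gridded permutation, with columns indexed by `A` and the columns in
`inc` increasing and the others decreasing, appear from left to right in the order of the keys
`cellKey inc a z`, where `a` is the column and `z` the height of the point. -/
noncomputable def cellKey (a : A) (z : ℤ) : A ×ₗ ℤ :=
  toLex (a, if a ∈ inc then z else -z)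

variable {m n : ℕ}

/-- The keys of the points of the gridded permutation in which the point of value `v` lies in
column `w v`. -/
noncomputable def pointKey (w : Fin n → A) (v : Fin n) : A ×ₗ ℤ :=
  cellKey inc (w v) v

theorem pointKey_injective (w : Fin n → A) : (pointKey inc w).Injective := by
  intro v v' h
  simp only [pointKey, cellKey, toLex_inj, Prod.mk.injEq] at h
  grind

theorem pointKey_update (w : Fin n → A) (v : Fin n) (a : A) :
    pointKey inc (Function.update w v a) =
      Function.update (pointKey inc w) v (cellKey inc a v) := by
  funext v'
  exact Function.apply_update (fun (v' : Fin n) a => cellKey inc a v') w v a v'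

variable [LinearOrder A]

/-- The permutation with a one-row gridding in which the point of value `v` lies in
column `w v`. -/
noncomputable def gridPerm (w : Fin n → A) : Equiv.Perm (Fin n) :=
  Tuple.sort (pointKey inc w)

variable {inc} {w w' : Fin n → A}

theorem cellKey_lt_cellKey {a b : A} {x y : ℤ} : cellKey inc a x < cellKey inc b y ↔
    a < b ∨ a = b ∧ (a ∈ inc ∧ x < y ∨ a ∉ inc ∧ y < x) := by
  simp only [cellKey, Prod.Lex.toLex_lt_toLex]
  grind

theorem cellKey_lt_cellKey_congr {a b : A} {x y x' y' : ℤ} (hlt : x < y ↔ x' < y')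
    (hgt : y < x ↔ y' < x') : cellKey inc a x < cellKey inc b y ↔
      cellKey inc a x' < cellKey inc b y' := by
  simp only [cellKey_lt_cellKey, hlt, hgt]

theorem cellKey_lt_cellKey_left {a b : A} {z : ℤ} : cellKey inc a z < cellKey inc b z ↔ a < b := by
  simp [cellKey_lt_cellKey]

theorem gridPerm_eq_iff {π : Equiv.Perm (Fin n)} :
    gridPerm inc w = π ↔ StrictMono (pointKey inc w ∘ π) :=
  sort_eq_iff_strictMono (pointKey_injective inc w)

theorem gridPerm_symm_lt_symm {v v' : Fin n} :
    (gridPerm inc w).symm v < (gridPerm inc w).symm v' ↔ pointKey inc w v < pointKey inc w v' :=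
  sort_symm_lt_sort_symm (pointKey_injective inc w)

theorem permContains_gridPerm_comp {f : Fin m → Fin n} (hf : StrictMono f) :
    PermContains (gridPerm inc (w ∘ f)) (gridPerm inc w) := by
  have hkey (v v' : Fin m) :
      pointKey inc (w ∘ f) v < pointKey inc (w ∘ f) v' ↔
        pointKey inc w (f v) < pointKey inc w (f v') :=
    cellKey_lt_cellKey_congr (by simp [hf.lt_iff_lt]) (by simp [hf.lt_iff_lt])
  refine ⟨fun i => (gridPerm inc w).symm (f (gridPerm inc (w ∘ f) i)), fun i j hij => ?_, ?_⟩
  · exact gridPerm_symm_lt_symm.2 ((hkey _ _).1 (gridPerm_eq_iff.1 rfl hij))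
  · simp [hf.lt_iff_lt]

variable (inc) in
/-- A word is *reducible* if moving a single point to an earlier column yields another gridding of
the same permutation. -/
def Reducible (w : Fin n → A) : Prop :=
  ∃ v, ∃ a < w v, gridPerm inc (Function.update w v a) = gridPerm inc w

theorem gridPerm_update_eq_iff {v : Fin n} {a : A} (ha : a < w v) :
    gridPerm inc (Function.update w v a) = gridPerm inc w ↔
      ∀ v', ¬ (cellKey inc a v < pointKey inc w v' ∧ pointKey inc w v' < pointKey inc w v) := by
  simp only [gridPerm, pointKey_update]
  refine sort_update_eq_sort_iff (pointKey_injective inc w) ?_ (cellKey_lt_cellKey_left.2 ha)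
  exact pointKey_update inc w v a ▸ pointKey_injective inc _

theorem exists_not_reducible [Finite A] (w : Fin n → A) :
    ∃ w', gridPerm inc w' = gridPerm inc w ∧ ¬ Reducible inc w' := by
  obtain ⟨w', hw', hmin⟩ :=
    (Set.toFinite {w' | gridPerm inc w' = gridPerm inc w}).exists_minimal ⟨w, rfl⟩
  refine ⟨w', hw', fun ⟨v, a, ha, h⟩ => ha.not_ge ?_⟩
  simpa using hmin (h.trans hw') (update_le_self_iff.2 ha.le) v

/-- If `w' v < w v`, then no point lies between the positions of `v` in the two griddings, as such a
point would precede `v` and so be in the same column for both. -/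
theorem le_of_not_reducible (hw : ¬ Reducible inc w) (h : gridPerm inc w = gridPerm inc w')
    {v : Fin n} (hbefore : ∀ v', pointKey inc w v' < pointKey inc w v → w v' = w' v') :
    w v ≤ w' v := by
  by_contra! hlt
  refine hw ⟨v, w' v, hlt, (gridPerm_update_eq_iff hlt).2 fun v' ⟨hgt', hlt'⟩ => ?_⟩
  have hiff := (sort_eq_sort_iff (pointKey_injective inc w) (pointKey_injective inc w')).1 h v' v
  have heq : pointKey inc w' v' = pointKey inc w v' := by rw [pointKey, ← hbefore v' hlt', pointKey]
  exact hgt'.not_gt (heq ▸ hiff.1 hlt')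

theorem gridPerm_injOn_not_reducible :
    Set.InjOn (gridPerm inc) {w : Fin n → A | ¬ Reducible inc w} := by
  intro w hw w' hw' h
  have hiff := (sort_eq_sort_iff (pointKey_injective inc w) (pointKey_injective inc w')).1 h
  have hwf : WellFounded fun v v' => pointKey inc w v < pointKey inc w v' :=
    Subrelation.wf gridPerm_symm_lt_symm.2 (InvImage.wf (gridPerm inc w).symm wellFounded_lt)
  funext v
  induction v using hwf.induction with | _ v ih => ?_
  exact le_antisymm (le_of_not_reducible hw h ih) (le_of_not_reducible hw' h.symm
    fun v' hv' => (ih v' ((hiff v' v).2 hv')).symm)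

variable (inc) in
/-- The columns in which no point below the moved one prevents moving it from column `b` to the
earlier column `a`. Only the relative order of the heights matters, so `0` and `1` stand for the
heights of the two points. -/
def freeBelow (a b : A) : Set A :=
  {c | ¬ (cellKey inc a 1 < cellKey inc c 0 ∧ cellKey inc c 0 < cellKey inc b 1)}

variable (inc) in
/-- The counterpart of `freeBelow` for the points above the moved one. -/
def freeAbove (a b : A) : Set A :=
  {c | ¬ (cellKey inc a 0 < cellKey inc c 1 ∧ cellKey inc c 1 < cellKey inc b 0)}

theorem gridPerm_update_eq_iff_free {v : Fin n} {a : A} (ha : a < w v) :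
    gridPerm inc (Function.update w v a) = gridPerm inc w ↔
      (∀ v' < v, w v' ∈ freeBelow inc a (w v)) ∧ ∀ v' > v, w v' ∈ freeAbove inc a (w v) := by
  have hbelow {v'} (h : v' < v) : w v' ∈ freeBelow inc a (w v) ↔
      ¬ (cellKey inc a v < pointKey inc w v' ∧ pointKey inc w v' < pointKey inc w v) := by
    refine not_congr (and_congr ?_ ?_) <;>
      exact cellKey_lt_cellKey_congr (by simp; omega) (by simp; omega)
  have habove {v'} (h : v' > v) : w v' ∈ freeAbove inc a (w v) ↔
      ¬ (cellKey inc a v < pointKey inc w v' ∧ pointKey inc w v' < pointKey inc w v) := by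
    refine not_congr (and_congr ?_ ?_) <;>
      exact cellKey_lt_cellKey_congr (by simp; omega) (by simp; omega)
  rw [gridPerm_update_eq_iff ha]
  refine ⟨fun h => ⟨fun v' hv => (hbelow hv).2 (h v'), fun v' hv => (habove hv).2 (h v')⟩,
    fun ⟨hb, hg⟩ v' => ?_⟩
  rcases lt_trichotomy v' v with hv | rfl | hv
  · exact (hbelow hv).1 (hb v' hv)
  · exact fun h => lt_irrefl _ h.2
  · exact (habove hv).1 (hg v' hv)

end GridPerm

section ClassLanguage

open List

variable {A : Type*} [LinearOrder A] {inc : Set A} {C : ∀ n, Set (Equiv.Perm (Fin n))}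
  {n : ℕ} {w : Fin n → A}

variable (inc) in
/-- The language of the reducible words. A pair `a < b` stands for the moves of a point from column
`b` to column `a`. -/
def reducibleWords : Language A :=
  ⨆ p : {p : A × A // p.1 < p.2},
    markedWords (freeBelow inc p.1.1 p.1.2) p.1.2 (freeAbove inc p.1.1 p.1.2)

theorem ofFn_mem_reducibleWords : ofFn w ∈ reducibleWords inc ↔ Reducible inc w := by
  simp only [reducibleWords, Language.mem_iSup, ofFn_mem_markedWords, Subtype.exists, Prod.exists]
  constructor
  · rintro ⟨a, _, ha, v, rfl, h⟩
    exact ⟨v, a, ha, (gridPerm_update_eq_iff_free ha).2 h⟩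
  · rintro ⟨v, a, ha, h⟩
    exact ⟨a, w v, ha, v, rfl, (gridPerm_update_eq_iff_free ha).1 h⟩

theorem isRegular_reducibleWords [Finite A] : (reducibleWords inc).IsRegular :=
  isRegular_iSup fun _ => isRegular_markedWords

variable (inc C) in
/-- The words of all one-row griddings of members of `C`. -/
def gridWords : Language A :=
  {l | gridPerm inc l.get ∈ C l.length}

theorem ofFn_mem_gridWords : ofFn w ∈ gridWords inc C ↔ gridPerm inc w ∈ C n := by
  change gridPerm inc (equivSigmaTuple (ofFn w)).2 ∈ C (equivSigmaTuple (ofFn w)).1 ↔ _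
  rw [show equivSigmaTuple (ofFn w) = ⟨n, w⟩ from equivSigmaTuple.apply_symm_apply ⟨n, w⟩]

theorem sublistClosed_gridWords (hC : IsPermClass C) : SublistClosed (gridWords inc C) := by
  intro x y hxy hy
  obtain ⟨f, hf⟩ := sublist_iff_exists_fin_orderEmbedding_get_eq.1 hxy
  refine hC _ _ _ _ hy ?_
  rw [show x.get = y.get ∘ f from funext hf]
  exact permContains_gridPerm_comp f.strictMono

theorem wordCount_gridWords_inf_compl [Finite A]
    (hsub : C n ⊆ Set.range (gridPerm inc : (Fin n → A) → _)) :
    wordCount (gridWords inc C ⊓ (reducibleWords inc)ᶜ) n = Nat.card (C n) := by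
  have hmem (w : Fin n → A) : ofFn w ∈ gridWords inc C ⊓ (reducibleWords inc)ᶜ ↔
      gridPerm inc w ∈ C n ∧ ¬ Reducible inc w := by
    rw [← ofFn_mem_gridWords, ← ofFn_mem_reducibleWords]
    exact Language.mem_inf
  have hbij : Set.BijOn (gridPerm inc) {w | gridPerm inc w ∈ C n ∧ ¬ Reducible inc w} (C n) := by
    refine ⟨fun w hw => hw.1, gridPerm_injOn_not_reducible.mono fun w hw => hw.2, fun π hπ => ?_⟩
    obtain ⟨w, hw⟩ := hsub hπ
    obtain ⟨w', hw', hred⟩ := exists_not_reducible (inc := inc) w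
    have hw'π : gridPerm inc w' = π := hw'.trans hw
    exact ⟨w', ⟨Set.mem_of_eq_of_mem hw'π hπ, hred⟩, hw'π⟩
  exact Nat.card_congr ((Equiv.subtypeEquivRight hmem).trans (hbij.equiv _))

theorem isRational_of_subset_range_gridPerm [Finite A] (hC : IsPermClass C)
    (hsub : ∀ n, C n ⊆ Set.range (gridPerm inc : (Fin n → A) → _)) :
    IsRational (PowerSeries.mk fun n => (Nat.card (C n) : ℚ)) := by
  have hregular : (gridWords inc C ⊓ (reducibleWords inc)ᶜ).IsRegular :=
    (sublistClosed_gridWords hC).isRegular.inf isRegular_reducibleWords.compl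
  have hcount n := wordCount_gridWords_inf_compl (hsub n)
  simpa only [hcount] using isRational_wordCount hregular

end ClassLanguage

section Gridding

theorem exists_castSucc_le_lt_succ {α : Type*} [LinearOrder α] {t : ℕ} {c : Fin (t + 1) → α}
    {x : α} (h0 : c 0 ≤ x) (hlast : x < c (Fin.last t)) :
    ∃ k : Fin t, c k.castSucc ≤ x ∧ x < c k.succ := by
  by_contra! h
  exact hlast.not_ge (Fin.induction h0 h (Fin.last t))

variable {n t u : ℕ} {M : Fin t → Fin u → SignType} {π : Equiv.Perm (Fin n)}
  {c : Fin (t + 1) → ℕ} {r : Fin (u + 1) → ℕ}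

theorem exists_inBlock (h : IsGridding M π c r) (i : Fin n) : ∃ k l, InBlock π c r k l i := by
  obtain ⟨-, -, hc0, hcl, hr0, hrl, -⟩ := h
  obtain ⟨k, hk⟩ := exists_castSucc_le_lt_succ (c := c) (x := i) (by omega) (by omega)
  obtain ⟨l, hl⟩ := exists_castSucc_le_lt_succ (c := r) (x := π i) (by omega) (by omega)
  exact ⟨k, l, hk.1, hk.2, hl⟩

theorem column_le_of_inBlock (hc : Monotone c) {k k' : Fin t} {l l' : Fin u} {i j : Fin n}
    (hi : InBlock π c r k l i) (hj : InBlock π c r k' l' j) (hij : i ≤ j) : k ≤ k' := by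
  by_contra! hlt
  have hcc : c k'.succ ≤ c k.castSucc := hc (Fin.succ_le_castSucc_iff.2 hlt)
  have := hi.1
  have := hj.2.1
  omega

theorem mem_range_gridPerm_of_row {l₀ : Fin u} (hM : ∀ k l, M k l ≠ 0 → l = l₀)
    (h : InGrid M π) :
    π ∈ Set.range (gridPerm {k : {k // M k l₀ ≠ 0} | M k l₀ = 1}) := by
  obtain ⟨c, r, hcr⟩ := h
  have hcol (i : Fin n) : ∃ k : {k // M k l₀ ≠ 0}, InBlock π c r k l₀ i := by
    obtain ⟨k, l, hb⟩ := exists_inBlock hcr i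
    have hne : M k l ≠ 0 := fun h0 => (hcr.2.2.2.2.2.2 k l).2.2 h0 i hb
    obtain rfl := hM k l hne
    exact ⟨⟨k, hne⟩, hb⟩
  choose col hcol using hcol
  obtain ⟨hc, -, -, -, -, -, hcell⟩ := hcr
  refine ⟨col ∘ π.symm, gridPerm_eq_iff.2 fun i j hij => ?_⟩
  simp only [Function.comp_apply, pointKey, Equiv.symm_apply_apply, cellKey_lt_cellKey]
  have hle : col i ≤ col j := column_le_of_inBlock hc (hcol i) (hcol j) hij.le
  rcases hle.lt_or_eq with hlt | heq
  · exact .inl hlt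
  · refine .inr ⟨heq, ?_⟩
    have hj := heq ▸ hcol j
    by_cases hinc : M (col i) l₀ = 1
    · exact .inl ⟨hinc, by simpa using (hcell _ _).1 hinc i j (hcol i) hj hij⟩
    · have hdec : M (col i) l₀ = -1 :=
        (M (col i) l₀).trichotomy.resolve_right (not_or.2 ⟨(col i).2, hinc⟩)
      exact .inr ⟨hinc, by simpa using (hcell _ _).2.1 hdec i j (hcol i) hj hij⟩

theorem isRational_of_row {l₀ : Fin u} (hM : ∀ k l, M k l ≠ 0 → l = l₀)
    {C : ∀ n, Set (Equiv.Perm (Fin n))} (hC : IsPermClass C) (hsub : ∀ n, ∀ π ∈ C n, InGrid M π) :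
    IsRational (PowerSeries.mk fun n => (Nat.card (C n) : ℚ)) :=
  isRational_of_subset_range_gridPerm hC fun n π hπ => mem_range_gridPerm_of_row hM (hsub n π hπ)

end Gridding

section Inverse

open scoped Pointwise

variable {m n t u : ℕ} {π : Equiv.Perm (Fin n)}

theorem permContains_inv {σ : Equiv.Perm (Fin m)} (h : PermContains σ π) :
    PermContains σ⁻¹ π⁻¹ := by
  obtain ⟨f, hf, h⟩ := h
  exact ⟨fun v => π (f (σ⁻¹ v)), fun v v' hv => (h _ _).1 (by simpa using hv),
    fun v v' => by simp [hf.lt_iff_lt]⟩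

theorem isPermClass_inv {C : ∀ n, Set (Equiv.Perm (Fin n))} (hC : IsPermClass C) :
    IsPermClass fun n => (C n)⁻¹ :=
  fun k n σ π hπ h => hC k n σ⁻¹ π⁻¹ hπ (permContains_inv h)

theorem inBlock_inv {c : Fin (t + 1) → ℕ} {r : Fin (u + 1) → ℕ} {k : Fin t} {l : Fin u}
    {v : Fin n} : InBlock π⁻¹ r c l k v ↔ InBlock π c r k l (π⁻¹ v) := by
  rw [InBlock, InBlock, show π (π⁻¹ v) = v from π.apply_symm_apply v]
  tauto

theorem inGrid_inv {M : Fin t → Fin u → SignType} (h : InGrid M π) :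
    InGrid (fun l k => M k l) π⁻¹ := by
  obtain ⟨c, r, hc, hr, hc0, hcl, hr0, hrl, hcell⟩ := h
  refine ⟨r, c, hr, hc, hr0, hrl, hc0, hcl, fun l k => ⟨?_, ?_, ?_⟩⟩ <;>
    simp only [inBlock_inv]
  · intro hM v v' hv hv' hlt
    have hmono : StrictMonoOn π {i | InBlock π c r k l i} :=
      fun i hi j hj => (hcell k l).1 hM i j hi hj
    exact (hmono.lt_iff_lt hv hv').1 (by simpa using hlt)
  · intro hM v v' hv hv' hlt
    have hanti : StrictAntiOn π {i | InBlock π c r k l i} :=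
      fun i hi j hj => (hcell k l).2.1 hM i j hi hj
    exact (hanti.lt_iff_gt hv hv').1 (by simpa using hlt)
  · exact fun hM v => (hcell k l).2.2 hM _

end Inverse

end StarGrid

/-- **Theorem (Albert–Atkinson–Ruškuc).** If `G(M)` is a star then every permutation class
contained in `Grid(M)` has a rational generating function `∑ |C_n| xⁿ = p(x)/q(x)`. -/
theorem star_grid_rational (t u : ℕ) (M : Fin t → Fin u → SignType) (hstar : IsStarMat M)
    (C : ∀ n : ℕ, Set (Equiv.Perm (Fin n))) (hC : IsPermClass C)
    (hsub : ∀ n : ℕ, ∀ π ∈ C n, InGrid M π) :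
    ∃ p q : Polynomial ℚ, q ≠ 0 ∧
      (PowerSeries.mk fun n => (Nat.card (C n) : ℚ)) * (q : PowerSeries ℚ) =
        (p : PowerSeries ℚ) := by
  rcases hstar with ⟨k₀, hcol⟩ | ⟨l₀, hrow⟩
  · have hinv := StarGrid.isRational_of_row (fun l k h => hcol k l h)
      (StarGrid.isPermClass_inv hC) fun n π hπ => StarGrid.inGrid_inv (hsub n π⁻¹ hπ)
    simpa only [Set.natCard_inv] using! hinv
  · exact StarGrid.isRational_of_row hrow hC hsub
end
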